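/- arXiv:1409.3583 — 6 statements merged into one kernel-verified Lean document; each statement's English description precedes it below -/
import Mathlib

section
/- Let G be a finite simple gap-free graph and let e = uv be an edge of G. If the 3-path ideal I_3(G) is nonzero, then the colon ideal (I_3(G) : x_u x_v) is generated in degree one; in particular it is a prime ideal generated by variables. -/
open MvPolynomial

/-! Graph-theoretic definitions -/

/-- A list of vertices is a path in `G`: consecutive vertices are adjacent and all
vertices are distinct. -/
def SimpleGraph.IsPathList {V : Type*} (G : SimpleGraph V) (l : List V) : Prop :=
  l.Chain' G.Adj ∧ l.Nodup

/-- The `t`-path ideal of a graph: the ideal generated by the monomials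
`x_{v_1} ⋯ x_{v_t}` where `v_1 ⋯ v_t` is a path on `t` distinct vertices of `G`. -/
noncomputable def pathIdeal {V K : Type*} [CommRing K] (G : SimpleGraph V) (t : ℕ) :
    Ideal (MvPolynomial V K) :=
  Ideal.span { p | ∃ l : List V, G.IsPathList l ∧ l.length = t ∧ p = (l.map X).prod }

/-- The edge ideal of a graph. -/
noncomputable def edgeIdeal {V K : Type*} [CommRing K] (G : SimpleGraph V) :
    Ideal (MvPolynomial V K) :=
  Ideal.span { p | ∃ u v, G.Adj u v ∧ p = X u * X v }

/-- `G` is gap-free: any two vertex-disjoint edges are joined by an edge. -/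
def SimpleGraph.GapFree {V : Type*} (G : SimpleGraph V) : Prop :=
  ∀ a b c d : V, G.Adj a b → G.Adj c d → a ≠ c → a ≠ d → b ≠ c → b ≠ d →
    (G.Adj a c ∨ G.Adj a d ∨ G.Adj b c ∨ G.Adj b d)

/-- `G` is claw-free: it has no induced `K_{1,3}`. -/
def SimpleGraph.ClawFree {V : Type*} (G : SimpleGraph V) : Prop :=
  ∀ v a b c : V, G.Adj v a → G.Adj v b → G.Adj v c → a ≠ b → a ≠ c → b ≠ c →
    (G.Adj a b ∨ G.Adj a c ∨ G.Adj b c)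

/-- `G` is cricket-free: it has no induced cricket. -/
def SimpleGraph.CricketFree {V : Type*} (G : SimpleGraph V) : Prop :=
  ¬ ∃ w1 w2 w3 w4 w5 : V,
      w1 ≠ w2 ∧ w1 ≠ w3 ∧ w1 ≠ w4 ∧ w1 ≠ w5 ∧ w2 ≠ w3 ∧ w2 ≠ w4 ∧ w2 ≠ w5 ∧
      w3 ≠ w4 ∧ w3 ≠ w5 ∧ w4 ≠ w5 ∧
      G.Adj w1 w3 ∧ G.Adj w2 w3 ∧ G.Adj w3 w4 ∧ G.Adj w3 w5 ∧ G.Adj w4 w5 ∧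
      ¬ G.Adj w1 w2 ∧ ¬ G.Adj w1 w4 ∧ ¬ G.Adj w1 w5 ∧ ¬ G.Adj w2 w4 ∧ ¬ G.Adj w2 w5

/-- `w : Fin n → V` is an induced cycle of length `n` in `H`. -/
def SimpleGraph.IsInducedCycle {V : Type*} (H : SimpleGraph V) {n : ℕ} (w : Fin n → V) :
    Prop :=
  3 ≤ n ∧ Function.Injective w ∧
    ∀ i j : Fin n, H.Adj (w i) (w j) ↔
      ((j : ℕ) = ((i : ℕ) + 1) % n ∨ (i : ℕ) = ((j : ℕ) + 1) % n)

/-- A graph is chordal if it has no induced cycle of length at least four. -/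
def SimpleGraph.Chordal {V : Type*} (H : SimpleGraph V) : Prop :=
  ∀ (n : ℕ), 4 ≤ n → ∀ w : Fin n → V, ¬ H.IsInducedCycle w

/-! Monomial ideals, graded Betti numbers via the Taylor complex, and
Castelnuovo–Mumford regularity. -/

/-- The monomial ideal generated by the monomials with exponent vectors `gens`. -/
noncomputable def monomialSpan {V K : Type*} [CommRing K] {k : ℕ}
    (gens : Fin k → (V →₀ ℕ)) : Ideal (MvPolynomial V K) :=
  Ideal.span (Set.range fun i => monomial (gens i) (1 : K))

/-- The total degree of an exponent vector. -/
def monomialDegree {V : Type*} (m : V →₀ ℕ) : ℕ := m.sum fun _ n => n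

/-- `m` is a minimal monomial generator of the monomial ideal `I`. -/
def IsMinimalMonomialGen {V K : Type*} [CommRing K] (I : Ideal (MvPolynomial V K))
    (m : V →₀ ℕ) : Prop :=
  monomial m (1 : K) ∈ I ∧ ∀ m' : V →₀ ℕ, m' ≤ m → m' ≠ m → monomial m' (1 : K) ∉ I

/-- The lcm of the monomials `gens i`, `i ∈ T`. -/
noncomputable def taylorLcm {V : Type*} {k : ℕ} (gens : Fin k → (V →₀ ℕ))
    (T : Finset (Fin k)) : V →₀ ℕ :=
  T.sup gens

open Classical in
/-- The boundary of a basis element of the Taylor complex of `gens`, tensored with the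
residue field `K`: only the terms where the lcm is unchanged survive. -/
noncomputable def taylorBoundary {V K : Type*} [Field K] {k : ℕ}
    (gens : Fin k → (V →₀ ℕ)) (T : Finset (Fin k)) : Finset (Fin k) →₀ K :=
  ∑ t ∈ T, if taylorLcm gens (T.erase t) = taylorLcm gens T then
      ((-1 : K) ^ (T.filter fun s => s < t).card) • Finsupp.single (T.erase t) (1 : K)
    else 0

/-- The differential of the Taylor complex of `gens` tensored with `K`. -/
noncomputable def taylorDiff {V K : Type*} [Field K] {k : ℕ}
    (gens : Fin k → (V →₀ ℕ)) : (Finset (Fin k) →₀ K) →ₗ[K] (Finset (Fin k) →₀ K) :=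
  Finsupp.lsum K fun T =>
    LinearMap.toSpanSingleton K (Finset (Fin k) →₀ K) (taylorBoundary gens T)

/-- The graded piece of the Taylor complex in homological degree `i` and internal
degree `j`. -/
noncomputable def taylorPiece {V K : Type*} [Field K] {k : ℕ}
    (gens : Fin k → (V →₀ ℕ)) (i j : ℕ) : Submodule K (Finset (Fin k) →₀ K) :=
  Submodule.span K { f | ∃ T : Finset (Fin k), T.card = i ∧
    monomialDegree (taylorLcm gens T) = j ∧ f = Finsupp.single T (1 : K) }

/-- Nonvanishing of the degree-`j` part of the `i`-th homology of the Taylor complex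
of `gens` tensored with `K`; since the Taylor complex is a graded free resolution of
`S/I` (where `I` is the ideal generated by the monomials `gens`), this says exactly
that `Tor_i^S(S/I, K)_j ≠ 0`. -/
noncomputable def taylorHomologyNonzero {V K : Type*} [Field K] {k : ℕ}
    (gens : Fin k → (V →₀ ℕ)) (i j : ℕ) : Prop :=
  ¬ (LinearMap.ker (taylorDiff (K := K) gens) ⊓ taylorPiece (K := K) gens i j ≤
      Submodule.map (taylorDiff (K := K) gens) (taylorPiece (K := K) gens (i + 1) j))

/-- For a monomial ideal `I`, `Tor_i^S(I, K)_j ≠ 0`.  (Since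
`Tor_i^S(I,K) ≅ Tor_{i+1}^S(S/I,K)`, this is computed from the Taylor complex on any
family of monomial generators of `I`.) -/
def IdealTorNonzero {V K : Type*} [Field K] (I : Ideal (MvPolynomial V K))
    (i j : ℕ) : Prop :=
  ∃ (k : ℕ) (gens : Fin k → (V →₀ ℕ)), I = monomialSpan gens ∧
    taylorHomologyNonzero (K := K) gens (i + 1) j

/-- The Castelnuovo–Mumford regularity of a monomial ideal `I`:
`reg I = max { j - i : Tor_i^S(I, K)_j ≠ 0 }`. -/
noncomputable def reg {V K : Type*} [Field K] (I : Ideal (MvPolynomial V K)) : ℕ :=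
  sSup { d | ∃ i j : ℕ, IdealTorNonzero I i j ∧ d = j - i }

open Classical in
/-- The evaluation that kills the variables in `s` and fixes the others. -/
noncomputable def killVars {V : Type*} (K : Type*) [Field K] (s : Set V) :
    MvPolynomial V K →ₐ[K] MvPolynomial V K :=
  aeval fun w => if w ∈ s then 0 else X w

/-- The ideal generated by a set of variables is the kernel of `killVars`. -/
theorem span_vars_eq_ker {V K : Type*} [Field K] (s : Set V) :
    Ideal.span ((fun w => (X w : MvPolynomial V K)) '' s) = RingHom.ker (killVars K s) := by
  classical
  apply le_antisymm
  · rw [Ideal.span_le]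
    rintro _ ⟨w, hw, rfl⟩
    simp [killVars, RingHom.mem_ker, hw]
  · intro p hp
    set I := Ideal.span ((fun w => (X w : MvPolynomial V K)) '' s) with hI
    have key : (Ideal.Quotient.mkₐ K I).comp (killVars K s) = Ideal.Quotient.mkₐ K I := by
      apply MvPolynomial.algHom_ext
      intro w
      by_cases hw : w ∈ s
      · have h1 : (X w : MvPolynomial V K) ∈ I := Ideal.subset_span ⟨w, hw, rfl⟩
        have h2 : Ideal.Quotient.mk I (X w) = 0 := Ideal.Quotient.eq_zero_iff_mem.mpr h1
        simp [killVars, hw, h2]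
      · simp [killVars, hw]
    have h := DFunLike.congr_fun key p
    rw [RingHom.mem_ker] at hp
    simp only [AlgHom.comp_apply, hp, map_zero] at h
    exact Ideal.Quotient.eq_zero_iff_mem.mp h.symm

/-- An ideal generated by variables is prime. -/
theorem span_vars_isPrime {V K : Type*} [Field K] (s : Set V) :
    (Ideal.span ((fun w => (X w : MvPolynomial V K)) '' s)).IsPrime := by
  rw [span_vars_eq_ker]
  exact RingHom.ker_isPrime _

/-- A variable outside `s` is not in the ideal generated by the variables in `s`. -/
theorem X_notMem_span_vars {V K : Type*} [Field K] {s : Set V} {w : V} (hw : w ∉ s) :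
    (X w : MvPolynomial V K) ∉ Ideal.span ((fun w => (X w : MvPolynomial V K)) '' s) := by
  rw [span_vars_eq_ker, RingHom.mem_ker]
  simp [killVars, hw]

/-- The colon ideal is generated by the neighbours of the edge. -/
theorem colon_eq_span {V K : Type*} [Field K] (G : SimpleGraph V)
    (hgap : G.GapFree) (u v : V) (he : G.Adj u v) :
    Submodule.colon (pathIdeal (K := K) G 3)
        (Ideal.span {X u * X v} : Ideal (MvPolynomial V K)) =
      Ideal.span ((fun w => (X w : MvPolynomial V K)) ''
        {w | w ≠ u ∧ w ≠ v ∧ (G.Adj u w ∨ G.Adj v w)}) := by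
  set s : Set V := {w | w ≠ u ∧ w ≠ v ∧ (G.Adj u w ∨ G.Adj v w)} with hs
  have hne := he.ne
  have hu : u ∉ s := fun h => h.1 rfl
  have hv : v ∉ s := fun h => h.2.1 rfl
  have hprime := span_vars_isPrime (K := K) s
  have hle : pathIdeal (K := K) G 3 ≤ Ideal.span ((fun w => (X w : MvPolynomial V K)) '' s) := by
    rw [pathIdeal, Ideal.span_le]
    rintro _ ⟨l, ⟨hc, hnd⟩, hlen, rfl⟩
    obtain ⟨a, b, c, rfl⟩ := List.length_eq_three.mp hlen
    have hc2 : List.IsChain G.Adj [a, b, c] := hc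
    simp only [List.isChain_cons_cons, List.isChain_singleton, and_true] at hc2
    obtain ⟨hab, hbc⟩ := hc2
    have hac : a ≠ c := by
      rintro rfl
      simp at hnd
    have hex : a ∈ s ∨ b ∈ s ∨ c ∈ s := by
      have hg := hgap u v a b he hab
      have h1 := hab.symm
      have h2 := hbc.symm
      have h3 := hab.ne
      have h4 := hbc.ne
      simp only [hs, Set.mem_setOf_eq]
      by_cases hbu : b = u
      · subst hbu
        by_cases hav : a = v
        · subst hav
          exact Or.inr (Or.inr ⟨h4.symm, hac.symm, Or.inl hbc⟩)
        · exact Or.inl ⟨h3, hav, Or.inl h1⟩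
      by_cases hbv : b = v
      · subst hbv
        by_cases hau : a = u
        · subst hau
          exact Or.inr (Or.inr ⟨hac.symm, h4.symm, Or.inr hbc⟩)
        · exact Or.inl ⟨hau, h3, Or.inr h1⟩
      by_cases hau : a = u
      · subst hau
        exact Or.inr (Or.inl ⟨hbu, hbv, Or.inl hab⟩)
      by_cases hav : a = v
      · subst hav
        exact Or.inr (Or.inl ⟨hbu, hbv, Or.inr hab⟩)
      rcases hg (Ne.symm hau) (Ne.symm hbu) (Ne.symm hav) (Ne.symm hbv) with h | h | h | h
      · exact Or.inl ⟨hau, hav, Or.inl h⟩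
      · exact Or.inr (Or.inl ⟨hbu, hbv, Or.inl h⟩)
      · exact Or.inl ⟨hau, hav, Or.inr h⟩
      · exact Or.inr (Or.inl ⟨hbu, hbv, Or.inr h⟩)
    have hX : ∀ w ∈ s, (X w : MvPolynomial V K) ∈
        Ideal.span ((fun w => (X w : MvPolynomial V K)) '' s) :=
      fun w hw => Ideal.subset_span ⟨w, hw, rfl⟩
    simp only [List.map_cons, List.map_nil, List.prod_cons, List.prod_nil, mul_one,
      SetLike.mem_coe]
    rcases hex with h | h | h
    · exact Ideal.mul_mem_right _ _ (hX _ h)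
    · exact Ideal.mul_mem_left _ _ (Ideal.mul_mem_right _ _ (hX _ h))
    · exact Ideal.mul_mem_left _ _ (Ideal.mul_mem_left _ _ (hX _ h))
  apply le_antisymm
  · intro f hf
    have h1 := hle (Submodule.mem_colon.mp hf (X u * X v) (Ideal.subset_span rfl))
    rw [smul_eq_mul] at h1
    rcases hprime.mem_or_mem h1 with h | h
    · exact h
    · rcases hprime.mem_or_mem h with h | h
      · exact absurd h (X_notMem_span_vars hu)
      · exact absurd h (X_notMem_span_vars hv)
  · rw [Ideal.span_le]
    rintro _ ⟨w, ⟨hwu, hwv, hw⟩, rfl⟩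
    have hmem : (X w * (X u * X v) : MvPolynomial V K) ∈ pathIdeal (K := K) G 3 := by
      rcases hw with hw | hw
      · refine Ideal.subset_span ⟨[w, u, v], ⟨?_, ?_⟩, rfl, ?_⟩
        · change List.IsChain G.Adj [w, u, v]
          simp [hw.symm, he]
        · simp [hwu, hwv, hne]
        · simp
      · refine Ideal.subset_span ⟨[u, v, w], ⟨?_, ?_⟩, rfl, ?_⟩
        · change List.IsChain G.Adj [u, v, w]
          simp [hw, he]
        · simp [Ne.symm hwu, Ne.symm hwv, hne]
        · simp only [List.map_cons, List.map_nil, List.prod_cons, List.prod_nil]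
          ring
    refine Submodule.mem_colon.mpr fun p hp => ?_
    obtain ⟨q, rfl⟩ := Ideal.mem_span_singleton'.mp hp
    rw [smul_eq_mul, mul_left_comm]
    exact Ideal.mul_mem_left _ _ hmem

/-- For a finite simple gap-free graph `G` with edge `uv` and `I_3(G) ≠ 0`,
the colon ideal `(I_3(G) : x_u x_v)` is generated in degree one; in particular it is a
prime ideal generated by variables. -/
theorem stmt0 {V K : Type*} [Fintype V] [Field K] (G : SimpleGraph V)
    (hgap : G.GapFree) (u v : V) (he : G.Adj u v)
    (h3 : pathIdeal (K := K) G 3 ≠ ⊥) :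
    (∃ S1 : Set (MvPolynomial V K), (∀ p ∈ S1, p.IsHomogeneous 1) ∧
        Submodule.colon (pathIdeal (K := K) G 3) (Ideal.span {X u * X v} : Ideal (MvPolynomial V K)) =
          Ideal.span S1) ∧
    (∃ s : Set V,
        Submodule.colon (pathIdeal (K := K) G 3) (Ideal.span {X u * X v} : Ideal (MvPolynomial V K)) =
          Ideal.span ((fun w => (X w : MvPolynomial V K)) '' s)) ∧
    (Submodule.colon (pathIdeal (K := K) G 3) (Ideal.span {X u * X v} : Ideal (MvPolynomial V K))).IsPrime := by
  have h := colon_eq_span (K := K) G hgap u v he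
  refine ⟨⟨_, ?_, h⟩, ⟨_, h⟩, ?_⟩
  · rintro _ ⟨w, _, rfl⟩
    exact isHomogeneous_X K w
  · rw [h]
    exact span_vars_isPrime _
end

section
/- Let G be a finite simple gap-free graph with nonzero 3-path ideal I_3(G), and let e_1, …, e_k be distinct edges of G (identified with their quadratic monomials). Then the colon ideal (I_3(G) + (e_1, …, e_{k−1})) : (e_k) is an ideal generated by variables. -/
open MvPolynomial

theorem mem_span_X_of_mul_X {V K : Type*} [Field K] (s : Set V) (u : V) (hu : u ∉ s)
    (f : MvPolynomial V K)
    (h : f * X u ∈ Ideal.span ((fun w => (X w : MvPolynomial V K)) '' s)) :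
    f ∈ Ideal.span ((fun w => (X w : MvPolynomial V K)) '' s) := by
  classical
  have e : (fun w => (X w : MvPolynomial V K)) = X := rfl
  rw [e, mem_ideal_span_X_image] at h ⊢
  intro m hm
  obtain ⟨i, hi, hmi⟩ := h (m + Finsupp.single u 1) (by
    rw [mem_support_iff, coeff_mul_X]
    exact mem_support_iff.mp hm)
  refine ⟨i, hi, ?_⟩
  have hne : u ≠ i := fun h => hu (h ▸ hi)
  simpa [Finsupp.single_apply, hne] using hmi

/-- For distinct edges `e_1, …, e_{k+1}` of a gap-free graph `G` with
`I_3(G) ≠ 0`, the colon ideal `(I_3(G) + (e_1, …, e_k)) : (e_{k+1})` is generated by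
variables.  (The edge `e_i` has endpoints `a i` and `b i`.) -/
theorem stmt3 {V K : Type*} [Fintype V] [Field K] (G : SimpleGraph V)
    (hgap : G.GapFree) (h3 : pathIdeal (K := K) G 3 ≠ ⊥)
    (k : ℕ) (a b : Fin (k + 1) → V) (hadj : ∀ i, G.Adj (a i) (b i))
    (hdist : ∀ i j, i ≠ j →
      ¬(a i = a j ∧ b i = b j) ∧ ¬(a i = b j ∧ b i = a j)) :
    ∃ s : Set V,
      Submodule.colon
          (pathIdeal (K := K) G 3 ⊔
            Ideal.span { p : MvPolynomial V K |
              ∃ i : Fin k, p = X (a i.castSucc) * X (b i.castSucc) })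
          ((Ideal.span {X (a (Fin.last k)) * X (b (Fin.last k))} : Ideal (MvPolynomial V K)) :
            Set (MvPolynomial V K)) =
        Ideal.span ((fun w => (X w : MvPolynomial V K)) '' s) := by
  classical
  set u := a (Fin.last k) with hu
  set v := b (Fin.last k) with hv
  have huv : G.Adj u v := hadj _
  have hne : u ≠ v := huv.ne
  let s : Set V := {w | w ≠ u ∧ w ≠ v ∧ (G.Adj u w ∨ G.Adj v w)}
  -- every edge other than `uv` meets `s`
  have key : ∀ x y, G.Adj x y → ¬ (x = u ∧ y = v) → ¬ (x = v ∧ y = u) → x ∈ s ∨ y ∈ s := by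
    intro x y hxy h1 h2
    have hxy' := hxy.symm
    have hn := hxy.ne
    by_cases c1 : x = u
    · right
      subst c1
      exact ⟨hn.symm, fun h => h1 ⟨rfl, h⟩, Or.inl hxy⟩
    by_cases c2 : x = v
    · right
      subst c2
      exact ⟨fun h => h2 ⟨rfl, h⟩, hn.symm, Or.inr hxy⟩
    by_cases c3 : y = u
    · left
      subst c3
      exact ⟨c1, c2, Or.inl hxy'⟩
    by_cases c4 : y = v
    · left
      subst c4
      exact ⟨c1, c2, Or.inr hxy'⟩
    rcases hgap u v x y huv hxy (Ne.symm c1) (Ne.symm c3) (Ne.symm c2) (Ne.symm c4) with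
      h | h | h | h
    · exact Or.inl ⟨c1, c2, Or.inl h⟩
    · exact Or.inr ⟨c3, c4, Or.inl h⟩
    · exact Or.inl ⟨c1, c2, Or.inr h⟩
    · exact Or.inr ⟨c3, c4, Or.inr h⟩
  have hX : ∀ w ∈ s, (X w : MvPolynomial V K) ∈
      Ideal.span ((fun w => (X w : MvPolynomial V K)) '' s) := fun w hw =>
    Ideal.subset_span ⟨w, hw, rfl⟩
  have hle : pathIdeal (K := K) G 3 ⊔ Ideal.span { p : MvPolynomial V K |
      ∃ i : Fin k, p = X (a i.castSucc) * X (b i.castSucc) } ≤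
      Ideal.span ((fun w => (X w : MvPolynomial V K)) '' s) := by
    refine sup_le (Ideal.span_le.mpr ?_) (Ideal.span_le.mpr ?_)
    · rintro p ⟨l, ⟨hc, hd⟩, hl, rfl⟩
      obtain ⟨x, y, z, rfl⟩ := List.length_eq_three.mp hl
      have hxy : G.Adj x y := by
        have := hc
        unfold List.Chain' at this
        simp at this
        exact this.1
      have hyz : G.Adj y z := by
        have := hc
        unfold List.Chain' at this
        simp at this
        exact this.2
      have hxz : x ≠ z := by
        rintro rfl
        simp at hd
      have hw : x ∈ s ∨ y ∈ s ∨ z ∈ s := by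
        by_cases c : (x = u ∧ y = v) ∨ (x = v ∧ y = u)
        · have := key y z hyz
          grind
        · have := key x y hxy
          grind
      have e : (List.map (X : V → MvPolynomial V K) [x, y, z]).prod = X x * (X y * X z) := by
        simp
      rw [e]
      rcases hw with h | h | h
      · exact Ideal.mul_mem_right _ _ (hX _ h)
      · exact Ideal.mul_mem_left _ _ (Ideal.mul_mem_right _ _ (hX _ h))
      · exact Ideal.mul_mem_left _ _ (Ideal.mul_mem_left _ _ (hX _ h))
    · rintro p ⟨i, rfl⟩
      have hd := hdist i.castSucc (Fin.last k) (Fin.castSucc_lt_last i).ne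
      rcases key _ _ (hadj i.castSucc) hd.1 hd.2 with h | h
      · exact Ideal.mul_mem_right _ _ (hX _ h)
      · exact Ideal.mul_mem_left _ _ (hX _ h)
  refine ⟨s, le_antisymm ?_ (Ideal.span_le.mpr ?_)⟩
  · intro f hf
    rw [Submodule.mem_colon] at hf
    have h := hle (hf (X u * X v) (Ideal.subset_span rfl))
    rw [smul_eq_mul, ← mul_assoc] at h
    exact mem_span_X_of_mul_X s u (fun h => h.1 rfl) _
      (mem_span_X_of_mul_X s v (fun h => h.2.1 rfl) _ h)
  · rintro _ ⟨w, ⟨h1, h2, h⟩, rfl⟩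
    refine Submodule.mem_colon.mpr fun p hp => ?_
    obtain ⟨q, rfl⟩ := Ideal.mem_span_singleton'.mp hp
    refine Ideal.mem_sup_left ?_
    have hm : (X w * (X u * X v) : MvPolynomial V K) ∈ pathIdeal (K := K) G 3 := by
      rcases h with h | h
      · refine Ideal.subset_span ⟨[w, u, v], ⟨?_, ?_⟩, rfl, by simp⟩
        · unfold List.Chain'
          simp [h.symm, huv]
        · simp [h1, h2, hne]
      · refine Ideal.subset_span ⟨[w, v, u], ⟨?_, ?_⟩, rfl, by simp [mul_comm]⟩
        · unfold List.Chain'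
          simp [h.symm, huv.symm]
        · simp [h1, h2, hne.symm]
    have e : (X w : MvPolynomial V K) • (q * (X u * X v)) = q * (X w * (X u * X v) : MvPolynomial V K) := by
      rw [smul_eq_mul]; ring
    rw [e]
    exact Ideal.mul_mem_left _ _ hm
end

section
/- Let G be a finite simple gap-free graph with nonzero 4-path ideal I_4(G), let e = xy be an edge of G, and let G' be the simple graph whose edge ideal equals the squarefree quadratic monomial ideal (I_4(G) : x_x x_y). Then G' is gap-free. -/
open MvPolynomial

/-- Membership of a monomial, given by a list of variables, in an ideal generated by such
monomials. -/
theorem list_prod_mem_span_iff {V K : Type*} [Field K] (P : List V → Prop) (m : List V) :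
    ((m.map X).prod : MvPolynomial V K) ∈
      Ideal.span {p : MvPolynomial V K | ∃ l : List V, P l ∧ p = (l.map X).prod} ↔
      ∃ l : List V, P l ∧ l.Subperm m := by
  classical
  have key : ∀ l : List V, ((l.map X).prod : MvPolynomial V K) =
      monomial (Multiset.toFinsupp (l : Multiset V)) 1 := by
    intro l
    induction l with
    | nil => simp
    | cons a t ih =>
      rw [List.map_cons, List.prod_cons, ih, ← Multiset.cons_coe, ← Multiset.singleton_add,
        map_add, Multiset.toFinsupp_singleton, X, monomial_mul, one_mul]
  have hset : {p : MvPolynomial V K | ∃ l : List V, P l ∧ p = (l.map X).prod} =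
      Set.image (fun s => monomial s (1 : K)) {s | ∃ l : List V, P l ∧
        s = Multiset.toFinsupp (l : Multiset V)} := by
    ext p
    constructor
    · rintro ⟨l, hl, rfl⟩
      exact ⟨_, ⟨l, hl, rfl⟩, (key l).symm⟩
    · rintro ⟨_, ⟨l, hl, rfl⟩, rfl⟩
      exact ⟨l, hl, (key l).symm⟩
  rw [hset, mem_ideal_span_monomial_image, key, support_monomial, if_neg one_ne_zero]
  constructor
  · intro h
    obtain ⟨_, ⟨l, hl, rfl⟩, hle⟩ := h _ (Finset.mem_singleton_self _)
    refine ⟨l, hl, ?_⟩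
    rw [← Multiset.coe_le]
    exact Finsupp.orderIsoMultiset.symm.le_iff_le.mp hle
  · rintro ⟨l, hl, hs⟩ xi hxi
    rw [Finset.mem_singleton] at hxi
    subst hxi
    refine ⟨_, ⟨l, hl, rfl⟩, ?_⟩
    rw [← Multiset.coe_le] at hs
    exact Finsupp.orderIsoMultiset.symm.monotone hs

/-- The combinatorial description of the edges of `G'`. -/
theorem adj_colon_iff {V K : Type*} [Field K] (G : SimpleGraph V)
    (x y : V) (G' : SimpleGraph V)
    (hG' : edgeIdeal (K := K) G' =
      Submodule.colon (pathIdeal (K := K) G 4) (Ideal.span {X x * X y} : Ideal (MvPolynomial V K)))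
    (a b : V) : G'.Adj a b ↔ ∃ l : List V, (G.IsPathList l ∧ l.length = 4) ∧
      l.Perm [a, b, x, y] := by
  have h1 : (X a * X b : MvPolynomial V K) ∈ edgeIdeal (K := K) G' ↔ G'.Adj a b := by
    have hs : edgeIdeal (K := K) G' = Ideal.span {p : MvPolynomial V K | ∃ l : List V,
        (∃ u v, G'.Adj u v ∧ l = [u, v]) ∧ p = (l.map X).prod} := by
      unfold edgeIdeal
      congr 1
      ext p
      constructor
      · rintro ⟨u, v, h, rfl⟩
        exact ⟨[u, v], ⟨u, v, h, rfl⟩, by simp⟩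
      · rintro ⟨_, ⟨u, v, h, rfl⟩, rfl⟩
        exact ⟨u, v, h, by simp⟩
    have := list_prod_mem_span_iff (K := K) (fun l => ∃ u v, G'.Adj u v ∧ l = [u, v]) [a, b]
    rw [← hs] at this
    rw [show (X a * X b : MvPolynomial V K) = ([a, b].map X).prod by simp, this]
    constructor
    · rintro ⟨_, ⟨u, v, h, rfl⟩, hs⟩
      have hp := hs.perm_of_length_le (by simp)
      have hu : u ∈ [a, b] := hp.subset (by simp)
      have hv : v ∈ [a, b] := hp.subset (by simp)
      have hne := h.ne
      simp only [List.mem_cons, List.not_mem_nil, or_false] at hu hv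
      rcases hu with rfl | rfl <;> rcases hv with rfl | rfl
      · exact absurd rfl hne
      · exact h
      · exact h.symm
      · exact absurd rfl hne
    · intro h
      exact ⟨_, ⟨a, b, h, rfl⟩, List.Subperm.refl _⟩
  have h2 : (X a * X b : MvPolynomial V K) ∈ edgeIdeal (K := K) G' ↔
      (([a, b, x, y].map X).prod : MvPolynomial V K) ∈ pathIdeal (K := K) G 4 := by
    have e : (([a, b, x, y].map X).prod : MvPolynomial V K) = X a * X b * (X x * X y) := by
      simp [mul_assoc]
    rw [hG', Submodule.mem_colon, e]
    constructor
    · intro h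
      exact h _ (Ideal.subset_span rfl)
    · intro h p hp
      obtain ⟨q, rfl⟩ := Ideal.mem_span_singleton'.mp hp
      have := Ideal.mul_mem_left _ q h
      rw [smul_eq_mul]
      convert this using 1
      ring
  have h3 := list_prod_mem_span_iff (K := K) (fun l => G.IsPathList l ∧ l.length = 4) [a, b, x, y]
  have h4 : pathIdeal (K := K) G 4 = Ideal.span {p : MvPolynomial V K | ∃ l : List V,
      (G.IsPathList l ∧ l.length = 4) ∧ p = (l.map X).prod} := by
    unfold pathIdeal
    simp only [and_assoc]
  rw [← h1, h2, h4, h3]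
  constructor
  · rintro ⟨l, hl, hs⟩
    exact ⟨l, hl, hs.perm_of_length_le (by simp [hl.2])⟩
  · rintro ⟨l, hl, hs⟩
    exact ⟨l, hl, hs.subperm⟩

/-- An edge of `G'` avoids `x, y` and is of one of two types. -/
theorem adj_colon_imp {V : Type*} (G : SimpleGraph V) (x y a b : V)
    (h : ∃ l : List V, (G.IsPathList l ∧ l.length = 4) ∧ l.Perm [a, b, x, y]) :
    (a ≠ b ∧ a ≠ x ∧ a ≠ y ∧ b ≠ x ∧ b ≠ y) ∧
      (G.Adj a b ∨ (G.Adj a x ∧ G.Adj b y) ∨ (G.Adj a y ∧ G.Adj b x)) := by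
  obtain ⟨l, ⟨⟨hc, hn⟩, hl⟩, hp⟩ := h
  have hn' := hp.nodup_iff.mp hn
  obtain ⟨p, q, r, s, rfl⟩ : ∃ p q r s, l = [p, q, r, s] := by
    match l, hl with
    | [p, q, r, s], _ => exact ⟨p, q, r, s, rfl⟩
  have ha : a ∈ [p, q, r, s] := hp.symm.subset (by simp)
  have hb : b ∈ [p, q, r, s] := hp.symm.subset (by simp)
  have hx : x ∈ [p, q, r, s] := hp.symm.subset (by simp)
  have hy : y ∈ [p, q, r, s] := hp.symm.subset (by simp)
  clear hp
  replace hc : List.IsChain G.Adj [p, q, r, s] := hc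
  simp only [List.mem_cons, List.not_mem_nil, or_false, List.nodup_cons, not_or,
    List.isChain_cons_cons] at ha hb hx hy hn' hn hc
  obtain ⟨hpq, hqr, hrs, -⟩ := hc
  have := hpq.symm
  have := hqr.symm
  have := hrs.symm
  refine ⟨⟨hn'.1.1, hn'.1.2.1, hn'.1.2.2, hn'.2.1.1, hn'.2.1.2⟩, ?_⟩
  clear hn hl
  rcases ha with rfl | rfl | rfl | rfl <;> rcases hb with rfl | rfl | rfl | rfl <;>
    rcases hx with rfl | rfl | rfl | rfl <;> grind

/-- If `G` is gap-free with `I_4(G) ≠ 0`, `e = xy` is an edge of `G`, and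
`G'` is the simple graph whose edge ideal is `(I_4(G) : x_x x_y)`, then `G'` is
gap-free. -/
theorem stmt5 {V K : Type*} [Fintype V] [Field K] (G : SimpleGraph V)
    (hgap : G.GapFree) (h4 : pathIdeal (K := K) G 4 ≠ ⊥)
    (x y : V) (he : G.Adj x y) (G' : SimpleGraph V)
    (hG' : edgeIdeal (K := K) G' =
      Submodule.colon (pathIdeal (K := K) G 4) (Ideal.span {X x * X y} : Ideal (MvPolynomial V K))) :
    G'.GapFree := by
  have E := adj_colon_iff G x y G' hG'
  have mk1 : ∀ a b, a ≠ b → a ≠ x → a ≠ y → b ≠ x → b ≠ y → G.Adj a x → G.Adj b y →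
      G'.Adj a b := by
    intro a b hab hax hay hbx hby h1 h2
    refine (E a b).mpr ⟨[a, x, y, b], ⟨⟨?_, ?_⟩, rfl⟩, ?_⟩
    · exact List.isChain_cons_cons.mpr ⟨h1, List.isChain_cons_cons.mpr
        ⟨he, List.isChain_cons_cons.mpr ⟨h2.symm, List.isChain_singleton _⟩⟩⟩
    · have := he.ne
      simp only [List.nodup_cons, List.mem_cons, List.not_mem_nil]
      grind
    · exact List.Perm.cons _ (List.perm_append_comm (l₁ := [x, y]) (l₂ := [b]))
  have mk2 : ∀ a b, a ≠ x → a ≠ y → b ≠ x → b ≠ y → G.Adj a b → G.Adj b x →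
      G'.Adj a b := by
    intro a b hax hay hbx hby h1 h2
    refine (E a b).mpr ⟨[a, b, x, y], ⟨⟨?_, ?_⟩, rfl⟩, List.Perm.refl _⟩
    · exact List.isChain_cons_cons.mpr ⟨h1, List.isChain_cons_cons.mpr
        ⟨h2, List.isChain_cons_cons.mpr ⟨he, List.isChain_singleton _⟩⟩⟩
    · have := he.ne
      have := h1.ne
      simp only [List.nodup_cons, List.mem_cons, List.not_mem_nil]
      grind
  have mk3 : ∀ a b, a ≠ x → a ≠ y → b ≠ x → b ≠ y → G.Adj a b → G.Adj b y →
      G'.Adj a b := by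
    intro a b hax hay hbx hby h1 h2
    refine (E a b).mpr ⟨[a, b, y, x], ⟨⟨?_, ?_⟩, rfl⟩, ?_⟩
    · exact List.isChain_cons_cons.mpr ⟨h1, List.isChain_cons_cons.mpr
        ⟨h2, List.isChain_cons_cons.mpr ⟨he.symm, List.isChain_singleton _⟩⟩⟩
    · have := he.ne
      have := h1.ne
      simp only [List.nodup_cons, List.mem_cons, List.not_mem_nil]
      grind
    · exact List.Perm.cons _ (List.Perm.cons _ (List.Perm.swap _ _ _))
  have mk : ∀ a b, a ≠ x → a ≠ y → b ≠ x → b ≠ y → G.Adj a b → G'.Adj a b := by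
    intro a b hax hay hbx hby h
    rcases hgap a b x y h he hax hay hbx hby with h1 | h1 | h1 | h1
    · exact (mk2 b a hbx hby hax hay h.symm h1).symm
    · exact (mk3 b a hbx hby hax hay h.symm h1).symm
    · exact mk2 a b hax hay hbx hby h h1
    · exact mk3 a b hax hay hbx hby h h1
  intro a b c d hab hcd hac had hbc hbd
  obtain ⟨⟨nab, nax, nay, nbx, nby⟩, tab⟩ := adj_colon_imp G x y a b ((E a b).mp hab)
  obtain ⟨⟨ncd, ncx, ncy, ndx, ndy⟩, tcd⟩ := adj_colon_imp G x y c d ((E c d).mp hcd)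
  have P : ∀ u v, u ≠ v → u ≠ x → u ≠ y → v ≠ x → v ≠ y →
      ((G.Adj u x ∧ G.Adj v y) ∨ (G.Adj u y ∧ G.Adj v x) ∨ G.Adj u v) → G'.Adj u v := by
    rintro u v h1 h2 h3 h4 h5 (h | h | h)
    · exact mk1 u v h1 h2 h3 h4 h5 h.1 h.2
    · exact (mk1 v u h1.symm h4 h5 h2 h3 h.2 h.1).symm
    · exact mk u v h2 h3 h4 h5 h
  have Pac := P a c hac nax nay ncx ncy
  have Pad := P a d had nax nay ndx ndy
  have Pbc := P b c hbc nbx nby ncx ncy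
  have Pbd := P b d hbd nbx nby ndx ndy
  have g1 := fun h => hgap a b x y h he nax nay nbx nby
  have g2 := fun h => hgap c d x y h he ncx ncy ndx ndy
  have g3 := fun h h' => hgap a b c d h h' hac had hbc hbd
  clear P mk mk1 mk2 mk3 E hG' hab hcd h4 hgap
  by_contra hcon
  grind
end

section
/- Let G be a finite simple gap-free graph with nonzero 4-path ideal I_4(G), let e = xy be an edge of G, and let G' be the simple graph whose edge ideal equals (I_4(G) : x_x x_y). Then every induced cycle of length at least five in the complement graph (G')^c is also an induced cycle in the complement graph G^c. -/
open MvPolynomial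

lemma prod_X_eq {V K : Type*} [DecidableEq V] [CommRing K] (l : List V) :
    (l.map (X : V → MvPolynomial V K)).prod =
      monomial (Multiset.toFinsupp (l : Multiset V)) (1 : K) := by
  induction l with
  | nil => simp
  | cons a t ih =>
    rw [List.map_cons, List.prod_cons, ih, ← Multiset.cons_coe, ← Multiset.singleton_add,
      map_add, Multiset.toFinsupp_singleton, X, monomial_mul, one_mul]

lemma mem_span_lists {V K : Type*} [Field K] (S : Set (List V)) (m : List V) :
    (m.map (X : V → MvPolynomial V K)).prod ∈
      Ideal.span { p : MvPolynomial V K | ∃ l ∈ S, p = (l.map X).prod } ↔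
      ∃ l ∈ S, (l : Multiset V) ≤ (m : Multiset V) := by
  classical
  have h : { p : MvPolynomial V K | ∃ l ∈ S, p = (l.map X).prod } =
      (fun s => monomial s (1 : K)) '' ((fun l : List V => Multiset.toFinsupp (l : Multiset V)) '' S) := by
    ext p
    simp only [prod_X_eq, Set.mem_setOf_eq, Set.mem_image, exists_exists_and_eq_and]
    exact exists_congr fun l => and_congr_right fun _ => eq_comm
  rw [h, mem_ideal_span_monomial_image, prod_X_eq, support_monomial, if_neg one_ne_zero]
  simp only [Finset.mem_singleton, forall_eq, Set.mem_image, exists_exists_and_eq_and]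
  refine exists_congr fun l => and_congr_right fun _ => ?_
  constructor
  · intro h
    rw [Multiset.le_iff_count]
    intro a
    simpa using h a
  · intro h a
    simpa using (Multiset.le_iff_count.1 h) a

lemma mem_edgeIdeal {V K : Type*} [Field K] (G : SimpleGraph V) (u v : V) :
    (X u * X v : MvPolynomial V K) ∈ edgeIdeal (K := K) G ↔ G.Adj u v := by
  have h1 : edgeIdeal (K := K) G = Ideal.span { p : MvPolynomial V K |
      ∃ l ∈ {l : List V | ∃ a b, G.Adj a b ∧ l = [a, b]}, p = (l.map X).prod } := by
    unfold edgeIdeal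
    congr 1
    ext p
    constructor
    · rintro ⟨a, b, hab, rfl⟩
      exact ⟨[a, b], ⟨a, b, hab, rfl⟩, by simp⟩
    · rintro ⟨l, ⟨a, b, hab, rfl⟩, rfl⟩
      exact ⟨a, b, hab, by simp⟩
  have h2 : (X u * X v : MvPolynomial V K) = ([u, v].map X).prod := by simp
  rw [h1, h2, mem_span_lists]
  constructor
  · rintro ⟨l, ⟨a, b, hab, rfl⟩, hle⟩
    have := Multiset.eq_of_le_of_card_le hle (by simp)
    have hp : [a, b].Perm [u, v] := Multiset.coe_eq_coe.1 this
    have ha : a ∈ [u, v] := hp.subset (by simp)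
    have hb : b ∈ [u, v] := hp.subset (by simp)
    have hne := hab.ne
    have hs := hab.symm
    simp only [List.mem_cons, List.not_mem_nil, or_false] at ha hb
    rcases ha with rfl | rfl <;> rcases hb with rfl | rfl <;> first | assumption | exact absurd rfl hne
  · intro h
    exact ⟨[u, v], ⟨u, v, h, rfl⟩, le_rfl⟩

lemma adj_iff {V K : Type*} [Field K] (G : SimpleGraph V) (x y : V) (G' : SimpleGraph V)
    (hG' : edgeIdeal (K := K) G' =
      Submodule.colon (pathIdeal (K := K) G 4)
        (Ideal.span {X x * X y} : Ideal (MvPolynomial V K))) (u v : V) :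
    G'.Adj u v ↔ ∃ l : List V, G.IsPathList l ∧ l.Perm [u, v, x, y] := by
  rw [← mem_edgeIdeal (K := K), hG']
  have h0 : (X u * X v : MvPolynomial V K) ∈ Submodule.colon (pathIdeal (K := K) G 4)
        (Ideal.span {X x * X y} : Ideal (MvPolynomial V K)) ↔
      ([u, v, x, y].map (X : V → MvPolynomial V K)).prod ∈ pathIdeal (K := K) G 4 := by
    have e : ([u, v, x, y].map (X : V → MvPolynomial V K)).prod
      = (X u * X v) * (X x * X y) := by simp [mul_assoc]
    rw [e, Submodule.mem_colon]
    constructor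
    · intro h
      exact h _ (Ideal.subset_span rfl)
    · intro h p hp
      obtain ⟨q, rfl⟩ := Ideal.mem_span_singleton'.1 hp
      rw [smul_eq_mul, mul_left_comm]
      exact Ideal.mul_mem_left _ _ h
  have h1 : pathIdeal (K := K) G 4 = Ideal.span { p : MvPolynomial V K |
      ∃ l ∈ {l : List V | G.IsPathList l ∧ l.length = 4}, p = (l.map X).prod } := by
    unfold pathIdeal
    congr 1
    ext p
    simp [and_assoc]
  rw [h0, h1, mem_span_lists]
  constructor
  · rintro ⟨l, ⟨hl, hc⟩, hle⟩
    exact ⟨l, hl, Multiset.coe_eq_coe.1 (Multiset.eq_of_le_of_card_le hle (by simp [hc]))⟩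
  · rintro ⟨l, hl, hp⟩
    exact ⟨l, ⟨hl, by simpa using hp.length_eq⟩, le_of_eq (Multiset.coe_eq_coe.2 hp)⟩

lemma adj_nodup {V : Type*} {G : SimpleGraph V} {x y u v : V}
    (h : ∃ l : List V, G.IsPathList l ∧ l.Perm [u, v, x, y]) : [u, v, x, y].Nodup := by
  obtain ⟨l, hl, hp⟩ := h
  exact hp.nodup_iff.1 hl.2

/-- A path on `u, v, x, y` with `u, v` nonadjacent joins `u` and `v` to different ends of `xy`. -/
lemma adj_cases {V : Type*} {G : SimpleGraph V} {x y u v : V}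
    (h : ∃ l : List V, G.IsPathList l ∧ l.Perm [u, v, x, y]) (huv : ¬ G.Adj u v) :
    (G.Adj u x ∧ G.Adj v y) ∨ (G.Adj u y ∧ G.Adj v x) := by
  have hn := adj_nodup h
  obtain ⟨l, hl, hp⟩ := h
  have hlen := hp.length_eq
  match l, hlen with
  | [a, b, c, d], _ =>
    obtain ⟨hc, hd⟩ := hl
    have hu : u ∈ [a, b, c, d] := hp.symm.subset (by simp)
    have hv : v ∈ [a, b, c, d] := hp.symm.subset (by simp)
    have hx : x ∈ [a, b, c, d] := hp.symm.subset (by simp)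
    have hy : y ∈ [a, b, c, d] := hp.symm.subset (by simp)
    unfold List.Chain' at hc
    simp only [List.isChain_cons_cons, List.isChain_singleton, and_true] at hc
    simp only [List.mem_cons, List.not_mem_nil, or_false] at hu hv hx hy
    simp only [List.nodup_cons, List.mem_cons, List.not_mem_nil, or_false, not_or] at hn
    have huv' : ¬ G.Adj v u := fun h => huv h.symm
    obtain ⟨h1, h2, h3⟩ := hc
    have h1' := h1.symm
    have h2' := h2.symm
    have h3' := h3.symm
    clear hd hp hlen
    rcases hu with rfl | rfl | rfl | rfl <;> rcases hv with rfl | rfl | rfl | rfl <;>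
      rcases hx with rfl | rfl | rfl | rfl <;> rcases hy with rfl | rfl | rfl | rfl <;> simp_all

lemma perm_adj {V : Type*} {G : SimpleGraph V} {x y u v : V} (hxy : G.Adj x y)
    (hn : [u, v, x, y].Nodup) (h : (G.Adj u x ∧ G.Adj v y) ∨ (G.Adj u y ∧ G.Adj v x)) :
    ∃ l : List V, G.IsPathList l ∧ l.Perm [u, v, x, y] := by
  rcases h with ⟨h1, h2⟩ | ⟨h1, h2⟩
  · have hp : [u, x, y, v].Perm [u, v, x, y] := by
      refine List.Perm.cons _ ?_
      exact (List.perm_append_comm (l₁ := [x, y]) (l₂ := [v]))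
    exact ⟨[u, x, y, v], ⟨by unfold List.Chain'; simp [h1, hxy, h2.symm], hp.nodup_iff.2 hn⟩, hp⟩
  · have hp : [u, y, x, v].Perm [u, v, x, y] := by
      refine List.Perm.cons _ ?_
      exact (List.perm_append_comm (l₁ := [y, x]) (l₂ := [v])).trans
        ((List.Perm.swap _ _ _).cons _)
    exact ⟨[u, y, x, v], ⟨by unfold List.Chain'; simp [h1, hxy.symm, h2.symm],
      hp.nodup_iff.2 hn⟩, hp⟩

lemma edge_touch {V : Type*} {G : SimpleGraph V} (hgap : G.GapFree) {x y u v : V}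
    (hxy : G.Adj x y) (hn : [u, v, x, y].Nodup) (huv : G.Adj u v) :
    G.Adj u x ∨ G.Adj u y ∨ G.Adj v x ∨ G.Adj v y := by
  simp only [List.nodup_cons, List.mem_cons, List.not_mem_nil, or_false, not_or] at hn
  exact hgap u v x y huv hxy hn.1.2.1 hn.1.2.2 hn.2.1.1 hn.2.1.2

lemma edge_adj {V : Type*} {G : SimpleGraph V} (hgap : G.GapFree) {x y u v : V}
    (hxy : G.Adj x y) (hn : [u, v, x, y].Nodup) (huv : G.Adj u v) :
    ∃ l : List V, G.IsPathList l ∧ l.Perm [u, v, x, y] := by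
  have swap2 : ∀ a b : V, [a, b].Perm [b, a] := fun a b => List.Perm.swap _ _ _
  rcases edge_touch hgap hxy hn huv with h | h | h | h
  · have hp : [v, u, x, y].Perm [u, v, x, y] := (swap2 v u).append_right [x, y]
    exact ⟨_, ⟨by unfold List.Chain'; simp [huv.symm, h, hxy], hp.nodup_iff.2 hn⟩, hp⟩
  · have hp : [v, u, y, x].Perm [u, v, x, y] := (swap2 v u).append (swap2 y x)
    exact ⟨_, ⟨by unfold List.Chain'; simp [huv.symm, h, hxy.symm], hp.nodup_iff.2 hn⟩, hp⟩
  · exact ⟨_, ⟨by unfold List.Chain'; simp [huv, h, hxy], hn⟩, List.Perm.refl _⟩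
  · have hp : [u, v, y, x].Perm [u, v, x, y] := (swap2 y x).append_left [u, v]
    exact ⟨_, ⟨by unfold List.Chain'; simp [huv, h, hxy.symm], hp.nodup_iff.2 hn⟩, hp⟩

/-- Purely combinatorial core, on a cyclic sequence with two labels `P`, `Q`. -/
lemma label_core {n : ℕ} (hn : 5 ≤ n) (P Q : ℕ → Prop)
    (hP : ∀ i, P (i + n) ↔ P i) (hQ : ∀ i, Q (i + n) ↔ Q i)
    (h1 : ∀ i, P i → ¬ Q (i + 1)) (h2 : ∀ i, Q i → ¬ P (i + 1))
    (h3 : ∀ k i, 2 ≤ i → i + 2 ≤ n → ¬ P k → ¬ Q k → P (k + i) ∨ Q (k + i)) :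
    (∀ i, ¬ Q i) ∨ (∀ i, ¬ P i) := by
  have red : ∀ (R : ℕ → Prop), (∀ i, R (i + n) ↔ R i) → ∀ k, (∀ i, i < n → ¬ R (k + i)) →
      ∀ j, ¬ R j := by
    intro R hR k hk j hj
    have hmul : ∀ c i, R (i + n * c) ↔ R i := by
      intro c
      induction c with
      | zero => simp
      | succ c ih => intro i; rw [Nat.mul_succ, ← add_assoc, hR, ih]
    have hlt : (j + n * k - k) % n < n := Nat.mod_lt _ (by omega)
    have hle : k ≤ n * k := Nat.le_mul_of_pos_left _ (by omega)
    apply hk _ hlt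
    rw [← hmul ((j + n * k - k) / n)]
    have := Nat.mod_add_div (j + n * k - k) n
    rw [add_assoc, this]
    have e : k + (j + n * k - k) = j + n * k := by omega
    rw [e, hmul]
    exact hj
  have main : ∀ (P Q : ℕ → Prop), (∀ i, P (i + n) ↔ P i) → (∀ i, Q (i + n) ↔ Q i) →
      (∀ i, P i → ¬ Q (i + 1)) → (∀ i, Q i → ¬ P (i + 1)) →
      (∀ k i, 2 ≤ i → i + 2 ≤ n → ¬ P k → ¬ Q k → P (k + i) ∨ Q (k + i)) →
      ∀ k, ¬ P k → ¬ Q k → P (k + 2) → ∀ i, ¬ Q i := by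
    intro P Q hP hQ h1 h2 h3 k hk1 hk2 hk
    have hall : ∀ i, i + 4 ≤ n → P (k + 2 + i) := by
      intro i
      induction i with
      | zero => intro _; simpa using hk
      | succ i ih =>
        intro hi
        have h := h1 _ (ih (by omega))
        rcases h3 k (2 + (i + 1)) (by omega) (by omega) hk1 hk2 with h' | h'
        · rwa [← add_assoc] at h'
        · rw [← add_assoc] at h'; exact absurd h' h
    refine red Q hQ k ?_
    intro i hi hq
    by_cases hi0 : i = 0
    · subst hi0; exact hk2 hq
    by_cases hi3 : i + 3 ≤ n
    · refine h2 _ hq ?_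
      by_cases hi1 : i = 1
      · subst hi1; exact hk
      · have := hall (i - 1) (by omega)
        rwa [show k + 2 + (i - 1) = k + i + 1 by omega] at this
    · have := hall (i - 3) (by omega)
      have := h1 _ this
      rw [show k + 2 + (i - 3) + 1 = k + i by omega] at this
      exact this hq
  by_cases hk : ∃ k, ¬ P k ∧ ¬ Q k
  · obtain ⟨k, hk1, hk2⟩ := hk
    rcases h3 k 2 le_rfl (by omega) hk1 hk2 with h | h
    · exact Or.inl (main P Q hP hQ h1 h2 h3 k hk1 hk2 h)
    · refine Or.inr (main Q P hQ hP h2 h1 (fun k i a b c d => (h3 k i a b d c).symm) k hk2 hk1 h)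
  · have hk' : ∀ k, P k ∨ Q k := by
      intro k; by_contra hc; exact hk ⟨k, not_or.1 hc⟩
    have gen : ∀ (P Q : ℕ → Prop), (∀ i, Q (i + n) ↔ Q i) → (∀ i, P i → ¬ Q (i + 1)) →
        (∀ k, P k ∨ Q k) → P 0 → ∀ i, ¬ Q i := by
      intro P Q hQ h1 hk' h0
      have hall : ∀ i, P i := by
        intro i
        induction i with
        | zero => exact h0
        | succ i ih => exact (hk' (i + 1)).resolve_right (h1 i ih)
      exact red Q hQ 1 (fun i _ => by rw [add_comm]; exact h1 i (hall i))
    rcases hk' 0 with h | h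
    · exact Or.inl (gen P Q hQ h1 hk' h)
    · exact Or.inr (gen Q P hP h2 (fun k => (hk' k).symm) h)


lemma mod_key {n : ℕ} (k i : ℕ) (hi : 2 ≤ i) (hi2 : i + 2 ≤ n) :
    k % n ≠ (k + i) % n ∧ ¬ ((k + i) % n = (k % n + 1) % n ∨ k % n = ((k + i) % n + 1) % n) := by
  have aux : ∀ d, 0 < d → d < n → ∀ m, ¬ m ≡ m + d [MOD n] := by
    intro d h0 hd m h
    have h' : m + 0 ≡ m + d [MOD n] := by simpa using h
    have := Nat.ModEq.add_left_cancel' m h'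
    have := Nat.le_of_dvd h0 ((Nat.modEq_zero_iff_dvd).1 this.symm)
    omega
  refine ⟨aux i (by omega) (by omega) k, ?_⟩
  rw [Nat.mod_add_mod, Nat.mod_add_mod]
  rintro (h | h)
  · refine aux (i - 1) (by omega) (by omega) (k + 1) ?_
    rw [show k + 1 + (i - 1) = k + i by omega]
    exact h.symm
  · exact aux (i + 1) (by omega) (by omega) k h

/-- If `G` is gap-free with `I_4(G) ≠ 0`, `e = xy` is an edge of `G`, and
`G'` is the simple graph whose edge ideal is `(I_4(G) : x_x x_y)`, then every induced
cycle of length at least five in `(G')ᶜ` is an induced cycle in `Gᶜ`. -/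
theorem stmt6 {V K : Type*} [Fintype V] [Field K] (G : SimpleGraph V)
    (hgap : G.GapFree) (h4 : pathIdeal (K := K) G 4 ≠ ⊥)
    (x y : V) (he : G.Adj x y) (G' : SimpleGraph V)
    (hG' : edgeIdeal (K := K) G' =
      Submodule.colon (pathIdeal (K := K) G 4) (Ideal.span {X x * X y} : Ideal (MvPolynomial V K))) :
    ∀ (n : ℕ), 5 ≤ n → ∀ w : Fin n → V,
      (G'ᶜ).IsInducedCycle w → (Gᶜ).IsInducedCycle w := by
  intro n hn w ⟨h3, hinj, hcyc⟩
  have A := adj_iff (K := K) G x y G' hG'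
  have hn0 : 0 < n := by omega
  -- membership in cycle avoids x and y
  have hnon : ∀ i : Fin n, ∃ j : Fin n, G'.Adj (w i) (w j) := by
    intro i
    let j : Fin n := ⟨(i + 2) % n, Nat.mod_lt _ hn0⟩
    refine ⟨j, ?_⟩
    have hi := i.2
    have key : (j : ℕ) ≠ i ∧ ¬ ((j : ℕ) = ((i : ℕ) + 1) % n ∨ (i : ℕ) = ((j : ℕ) + 1) % n) := by
      have := mod_key (n := n) i 2 le_rfl (by omega)
      rw [Nat.mod_eq_of_lt hi] at this
      exact ⟨this.1.symm, this.2⟩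
    have hne : w i ≠ w j := fun h => key.1 (by rw [hinj h])
    by_contra hc
    exact key.2 ((hcyc i j).1 ((SimpleGraph.compl_adj _ _ _).2 ⟨hne, hc⟩))
  have havoid : ∀ i : Fin n, w i ≠ x ∧ w i ≠ y := by
    intro i
    obtain ⟨j, hj⟩ := hnon i
    have := adj_nodup ((A _ _).1 hj)
    simp only [List.nodup_cons, List.mem_cons, List.not_mem_nil, or_false, not_or] at this
    exact this.1.2
  have hnd : ∀ i j : Fin n, i ≠ j → [w i, w j, x, y].Nodup := by
    intro i j hij
    have hw : w i ≠ w j := fun h => hij (hinj h)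
    simp [hw, (havoid i).1, (havoid i).2, (havoid j).1, (havoid j).2, he.ne]
  let f : ℕ → Fin n := fun i => ⟨i % n, Nat.mod_lt _ hn0⟩
  have hfper : ∀ i, f (i + n) = f i := fun i => by simp [f]
  have hfsucc : ∀ i, f i ≠ f (i + 1) ∧ ¬ G'.Adj (w (f i)) (w (f (i + 1))) := by
    intro i
    have : (G'ᶜ).Adj (w (f i)) (w (f (i + 1))) := by
      rw [hcyc]
      left
      simp [f]
    rw [SimpleGraph.compl_adj] at this
    exact ⟨fun h => this.1 (by rw [h]), this.2⟩
  have hfar : ∀ k i, 2 ≤ i → i + 2 ≤ n →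
      f k ≠ f (k + i) ∧ G'.Adj (w (f k)) (w (f (k + i))) := by
    intro k i hi hi2
    have key : f k ≠ f (k + i) ∧ ¬ ((f (k + i) : ℕ) = ((f k : ℕ) + 1) % n ∨
        (f k : ℕ) = ((f (k + i) : ℕ) + 1) % n) := by
      have := mod_key (n := n) k i hi hi2
      exact ⟨fun h => this.1 (congrArg Fin.val h), this.2⟩
    have hne : w (f k) ≠ w (f (k + i)) := fun h => key.1 (hinj h)
    refine ⟨key.1, ?_⟩
    by_contra hc
    exact key.2 ((hcyc _ _).1 ((SimpleGraph.compl_adj _ _ _).2 ⟨hne, hc⟩))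
  have hcore := label_core hn (fun i => G.Adj (w (f i)) x) (fun i => G.Adj (w (f i)) y)
    (fun i => by simp only [hfper]) (fun i => by simp only [hfper])
    (fun i hx hy => (hfsucc i).2 ((A _ _).2
      (perm_adj he (hnd _ _ (hfsucc i).1) (Or.inl ⟨hx, hy⟩))))
    (fun i hx hy => (hfsucc i).2 ((A _ _).2
      (perm_adj he (hnd _ _ (hfsucc i).1) (Or.inr ⟨hx, hy⟩))))
    (fun k i h2 hi hx hy => by
      obtain ⟨hne, hadj⟩ := hfar k i h2 hi
      by_cases hG : G.Adj (w (f k)) (w (f (k + i)))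
      · rcases edge_touch hgap he (hnd _ _ hne) hG with h | h | h | h
        · exact absurd h hx
        · exact absurd h hy
        · exact Or.inl h
        · exact Or.inr h
      · rcases adj_cases ((A _ _).1 hadj) hG with h | h
        · exact absurd h.1 hx
        · exact absurd h.1 hy)
  have hfid : ∀ i : Fin n, f i = i := fun i => by
    apply Fin.ext
    simp [f, Nat.mod_eq_of_lt i.2]
  have hiff : ∀ i j : Fin n, G'.Adj (w i) (w j) ↔ G.Adj (w i) (w j) := by
    intro i j
    constructor
    · intro h
      by_contra hG
      have hc := adj_cases ((A _ _).1 h) hG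
      rcases hcore with hh | hh
      · have hi := hh i
        have hj := hh j
        simp only [hfid] at hi hj
        tauto
      · have hi := hh i
        have hj := hh j
        simp only [hfid] at hi hj
        tauto
    · intro h
      exact (A _ _).2 (edge_adj hgap he (hnd i j (fun e => h.ne (by rw [e]))) h)
  refine ⟨h3, hinj, fun i j => ?_⟩
  rw [← hcyc i j, SimpleGraph.compl_adj, SimpleGraph.compl_adj, hiff]
end

section
/- Let G be a finite simple gap-free graph with nonzero 4-path ideal I_4(G), and let e_1, …, e_k, e be distinct edges of G (identified with their quadratic monomials). Then (I_4(G) + (e_1, …, e_k)) : (e) = (I_4(G) : e) + J, where J is an ideal generated by variables. -/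
open MvPolynomial

theorem list_prod_monomial {V K : Type*} [CommRing K] (l : List V) :
    ∃ n : V →₀ ℕ, (l.map (X : V → MvPolynomial V K)).prod = monomial n 1 := by
  induction l with
  | nil => exact ⟨0, by simp⟩
  | cons v l ih =>
    obtain ⟨n, hn⟩ := ih
    exact ⟨Finsupp.single v 1 + n, by
      rw [List.map_cons, List.prod_cons, hn, X, monomial_mul, one_mul]⟩

theorem path_mem {V K : Type*} [CommRing K] (G : SimpleGraph V) (p q r s : V)
    (h1 : G.Adj p q) (h2 : G.Adj q r) (h3 : G.Adj r s) (h4 : p ≠ r) (h5 : p ≠ s) (h6 : q ≠ s) :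
    (X p * X q * (X r * X s) : MvPolynomial V K) ∈ pathIdeal (K := K) G 4 := by
  apply Ideal.subset_span
  refine ⟨[p, q, r, s], ⟨?_, ?_⟩, rfl, ?_⟩
  · show List.IsChain G.Adj [p, q, r, s]
    simp [h1, h2, h3]
  · simp [h1.ne, h2.ne, h3.ne, h4, h5, h6]
  · simp [mul_assoc]

theorem disj_mem {V K : Type*} [CommRing K] (G : SimpleGraph V) (hgap : G.GapFree) (p q x y : V)
    (h : G.Adj p q) (he : G.Adj x y) (h1 : p ≠ x) (h2 : p ≠ y) (h3 : q ≠ x) (h4 : q ≠ y) :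
    (X p * X q * (X x * X y) : MvPolynomial V K) ∈ pathIdeal (K := K) G 4 := by
  rcases hgap p q x y h he h1 h2 h3 h4 with g | g | g | g
  · have := path_mem (K := K) G q p x y h.symm g he h3 h4 h2
    convert this using 1; ring
  · have := path_mem (K := K) G q p y x h.symm g he.symm h4 h3 h1
    convert this using 1; ring
  · have := path_mem (K := K) G p q x y h g he h1 h2 h4
    convert this using 1
  · have := path_mem (K := K) G p q y x h g he.symm h2 h1 h3
    convert this using 1; ring

theorem mem_colon_aux {R : Type*} [CommRing R] (I : Ideal R) (f r : R) :
    r ∈ Submodule.colon I (Ideal.span {f} : Ideal R) ↔ r * f ∈ I := by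
  exact Ideal.mem_colon_span_singleton

theorem monomial_mem_of_le {V K : Type*} [CommRing K] (I : Ideal (MvPolynomial V K))
    (n m : V →₀ ℕ) (h : n ≤ m) (hn : monomial n (1 : K) ∈ I) : monomial m (1 : K) ∈ I := by
  have : monomial m (1 : K) = monomial (m - n) 1 * monomial n 1 := by
    rw [monomial_mul, one_mul, tsub_add_cancel_of_le h]
  rw [this]
  exact I.mul_mem_left _ hn

/-- For distinct edges `e_1, …, e_k, e` of a gap-free graph `G` with
`I_4(G) ≠ 0`, one has `(I_4(G) + (e_1, …, e_k)) : (e) = (I_4(G) : e) + J` where `J` is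
generated by variables.  (Edge `e_i` has endpoints `a i`, `b i`; `e = xy`.) -/
theorem stmt8 {V K : Type*} [Fintype V] [Field K] (G : SimpleGraph V)
    (hgap : G.GapFree) (h4 : pathIdeal (K := K) G 4 ≠ ⊥)
    (k : ℕ) (a b : Fin k → V) (x y : V)
    (hadj : ∀ i, G.Adj (a i) (b i)) (he : G.Adj x y)
    (hdist : ∀ i j, i ≠ j →
      ¬(a i = a j ∧ b i = b j) ∧ ¬(a i = b j ∧ b i = a j))
    (hdiste : ∀ i, ¬(a i = x ∧ b i = y) ∧ ¬(a i = y ∧ b i = x)) :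
    ∃ s : Set V,
      Submodule.colon
          (pathIdeal (K := K) G 4 ⊔
            Ideal.span { p : MvPolynomial V K | ∃ i : Fin k, p = X (a i) * X (b i) })
          (Ideal.span {X x * X y} : Ideal (MvPolynomial V K)) =
        Submodule.colon (pathIdeal (K := K) G 4) (Ideal.span {X x * X y} : Ideal (MvPolynomial V K)) ⊔
          Ideal.span ((fun w => (X w : MvPolynomial V K)) '' s) := by
  classical
  set I := pathIdeal (K := K) G 4 with hI
  set E : Set (MvPolynomial V K) := { p | ∃ i : Fin k, p = X (a i) * X (b i) } with hE
  have hXX : ∀ u v : V, (X u * X v : MvPolynomial V K) =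
      monomial (Finsupp.single u 1 + Finsupp.single v 1) 1 := by
    intro u v
    rw [X, X, monomial_mul, one_mul]
  refine ⟨{w | ∃ i, (a i = w ∧ (b i = x ∨ b i = y)) ∨ (b i = w ∧ (a i = x ∨ a i = y))}, ?_⟩
  set s : Set V :=
    {w | ∃ i, (a i = w ∧ (b i = x ∨ b i = y)) ∨ (b i = w ∧ (a i = x ∨ a i = y))} with hs
  apply le_antisymm
  · intro f hf
    rw [mem_colon_aux] at hf
    -- generators are monomials
    set P : Set (MvPolynomial V K) :=
      { p | ∃ l : List V, G.IsPathList l ∧ l.length = 4 ∧ p = (l.map X).prod } with hP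
    have hgen : P ∪ E = (fun n => monomial n (1 : K)) '' {n | monomial n (1 : K) ∈ P ∪ E} := by
      ext p
      constructor
      · intro hp
        have : ∃ n, p = monomial n (1 : K) := by
          rcases hp with ⟨l, _, _, rfl⟩ | ⟨i, rfl⟩
          · exact list_prod_monomial l
          · exact ⟨_, hXX _ _⟩
        obtain ⟨n, rfl⟩ := this
        exact ⟨n, hp, rfl⟩
      · rintro ⟨n, hn, rfl⟩
        exact hn
    have hIE : I ⊔ Ideal.span E = Ideal.span (P ∪ E) := by
      rw [Ideal.span_union]; rfl
    rw [hIE, hgen, mem_ideal_span_monomial_image] at hf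
    rw [f.as_sum]
    refine Ideal.sum_mem _ fun m hm => ?_
    have hmon : monomial m (coeff m f) = C (coeff m f) * monomial m 1 := by
      rw [C_mul_monomial, mul_one]
    rw [hmon]
    apply Ideal.mul_mem_left
    obtain ⟨n, hn, hle⟩ := hf (m + (Finsupp.single x 1 + Finsupp.single y 1)) (by
      rw [mem_support_iff, hXX, coeff_mul_monomial, mul_one]
      exact mem_support_iff.1 hm)
    rcases hn with hn | ⟨i, hi⟩
    · apply Ideal.mem_sup_left
      rw [mem_colon_aux, hXX, monomial_mul, one_mul]
      exact monomial_mem_of_le I n _ hle (Ideal.subset_span hn)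
    · have hn : n = Finsupp.single (a i) 1 + Finsupp.single (b i) 1 := by
        rw [hXX] at hi
        exact monomial_left_injective one_ne_zero hi
      subst hn
      have hab := (hadj i).ne
      have hxy := he.ne
      have hda := hdiste i
      have hA := hle (a i)
      have hB := hle (b i)
      simp only [Finsupp.add_apply, Finsupp.single_apply, if_true, if_neg hab, if_neg hab.symm]
        at hA hB
      have key : ∀ w ∈ s, m w ≠ 0 → monomial m (1 : K) ∈ Submodule.colon I
          (Ideal.span {X x * X y} : Ideal (MvPolynomial V K)) ⊔
          Ideal.span ((fun w => (X w : MvPolynomial V K)) '' s) := by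
        intro w hw hmw
        apply Ideal.mem_sup_right
        apply monomial_mem_of_le _ (Finsupp.single w 1)
        · rw [Finsupp.single_le_iff]; omega
        · exact Ideal.subset_span ⟨w, hw, rfl⟩
      by_cases h1 : a i = x ∨ a i = y
      · apply key (b i) ⟨i, Or.inr ⟨rfl, h1⟩⟩
        grind
      by_cases h2 : b i = x ∨ b i = y
      · apply key (a i) ⟨i, Or.inl ⟨rfl, h2⟩⟩
        grind
      push Not at h1 h2
      apply Ideal.mem_sup_left
      apply monomial_mem_of_le _ (Finsupp.single (a i) 1 + Finsupp.single (b i) 1)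
      · intro v
        simp only [Finsupp.add_apply, Finsupp.single_apply]
        grind
      · rw [mem_colon_aux, ← hXX]
        exact disj_mem G hgap _ _ _ _ (hadj i) he h1.1 h1.2 h2.1 h2.2
  · apply sup_le
    · intro f hf
      rw [mem_colon_aux] at hf ⊢
      exact Ideal.mem_sup_left hf
    · rw [Ideal.span_le]
      rintro _ ⟨w, ⟨i, hi⟩, rfl⟩
      rw [SetLike.mem_coe, mem_colon_aux]
      apply Ideal.mem_sup_right
      have hmem : (X (a i) * X (b i) : MvPolynomial V K) ∈ Ideal.span E :=
        Ideal.subset_span ⟨i, rfl⟩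
      rcases hi with ⟨rfl, h | h⟩ | ⟨rfl, h | h⟩ <;> rw [h] at hmem
      · convert Ideal.mul_mem_left _ (X y) hmem using 1; ring
      · convert Ideal.mul_mem_left _ (X x) hmem using 1; ring
      · convert Ideal.mul_mem_left _ (X y) hmem using 1; ring
      · convert Ideal.mul_mem_left _ (X x) hmem using 1; ring
end

section
/- Let G be a finite simple graph that is both gap-free and cricket-free, with nonzero 4-path ideal I_4(G), let e = xy be an edge of G, and let G' be the simple graph whose edge ideal equals (I_4(G) : x_x x_y). Then the complement graph (G')^c is chordal; equivalently, reg(I_4(G) : x_x x_y) ≤ 2. -/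
open MvPolynomial

/-! ### Auxiliary: Taylor-type complexes with a base exponent -/

section TaylorAux

variable {V K : Type*} [Field K] {k : ℕ}

/-- The sign attached to the position of `t` relative to `T`. -/
noncomputable def auxSgn (K : Type*) [Field K] {k : ℕ} (t : Fin k) (T : Finset (Fin k)) : K :=
  (-1 : K) ^ (T.filter fun s => s < t).card

lemma auxSgn_sq (t : Fin k) (T : Finset (Fin k)) : auxSgn K t T * auxSgn K t T = 1 := by
  unfold auxSgn
  rw [← pow_add, ← two_mul, pow_mul]
  simp

lemma auxSgn_insert_self (t : Fin k) (T : Finset (Fin k)) :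
    auxSgn K t (insert t T) = auxSgn K t T := by
  unfold auxSgn
  rw [Finset.filter_insert]
  simp

lemma auxSgn_insert (t s : Fin k) (T : Finset (Fin k)) (h : s ∉ T) :
    auxSgn K t (insert s T) = (if s < t then -1 else 1) * auxSgn K t T := by
  unfold auxSgn
  rw [Finset.filter_insert]
  split_ifs with hs
  · rw [Finset.card_insert_of_notMem (by simp [h]), pow_succ]; ring
  · simp

lemma auxSgn_swap (t s : Fin k) (T : Finset (Fin k)) (hs : s ∈ T) (ht : t ∉ T) :
    auxSgn K t T * auxSgn K s (insert t T) =
      - (auxSgn K s T * auxSgn K t (T.erase s)) := by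
  have hst : s ≠ t := fun h => ht (h ▸ hs)
  rw [auxSgn_insert s t T ht]
  conv_lhs => rw [← Finset.insert_erase hs]
  rw [auxSgn_insert t s _ (Finset.notMem_erase s T), Finset.insert_erase hs]
  rcases lt_or_gt_of_ne hst with h | h
  · rw [if_pos h, if_neg (not_lt.mpr h.le)]; ring
  · rw [if_neg (not_lt.mpr h.le), if_pos h]; ring

/-- lcm with base. -/
noncomputable def auxL (g : Fin k → (V →₀ ℕ)) (m : V →₀ ℕ) (T : Finset (Fin k)) : V →₀ ℕ :=
  m ⊔ T.sup g

open Classical in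
/-- differential with base. -/
noncomputable def auxD (K : Type*) [Field K] (g : Fin k → (V →₀ ℕ)) (m : V →₀ ℕ) :
    (Finset (Fin k) →₀ K) →ₗ[K] (Finset (Fin k) →₀ K) :=
  Finsupp.linearCombination K fun T => ∑ s ∈ T, if auxL g m (T.erase s) = auxL g m T then
    auxSgn K s T • Finsupp.single (T.erase s) (1 : K) else 0

/-- insertion of an index. -/
noncomputable def auxIns (K : Type*) [Field K] (t : Fin k) :
    (Finset (Fin k) →₀ K) →ₗ[K] (Finset (Fin k) →₀ K) :=
  Finsupp.linearCombination K fun T => auxSgn K t T • Finsupp.single (insert t T) (1 : K)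

/-- removal of an index. -/
noncomputable def auxRem (K : Type*) [Field K] (t : Fin k) :
    (Finset (Fin k) →₀ K) →ₗ[K] (Finset (Fin k) →₀ K) :=
  Finsupp.linearCombination K fun T => auxSgn K t T • Finsupp.single (T.erase t) (1 : K)

open Classical in
/-- terms for which inserting `t` does not change the lcm. -/
noncomputable def auxPhi (K : Type*) [Field K] (g : Fin k → (V →₀ ℕ)) (m : V →₀ ℕ) (t : Fin k) :
    (Finset (Fin k) →₀ K) →ₗ[K] (Finset (Fin k) →₀ K) :=
  Finsupp.linearCombination K fun T =>
    if auxL g (m ⊔ g t) T = auxL g m T then Finsupp.single T (1 : K) else 0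

lemma aux_ext {M : Type*} [AddCommGroup M] [Module K M]
    (f h : (Finset (Fin k) →₀ K) →ₗ[K] M) (A : Set (Finset (Fin k)))
    (H : ∀ T ∈ A, f (Finsupp.single T 1) = h (Finsupp.single T 1))
    {z : Finset (Fin k) →₀ K} (hz : z ∈ Finsupp.supported K K A) : f z = h z := by
  rw [Finsupp.supported_eq_span_single] at hz
  refine LinearMap.eqOn_span (f := f) (g := h) ?_ hz
  rintro _ ⟨T, hT, rfl⟩
  exact H T hT

lemma aux_map {M : Type*} [AddCommGroup M] [Module K M]
    (f : (Finset (Fin k) →₀ K) →ₗ[K] M) (N : Submodule K M) (A : Set (Finset (Fin k)))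
    (H : ∀ T ∈ A, f (Finsupp.single T 1) ∈ N)
    {z : Finset (Fin k) →₀ K} (hz : z ∈ Finsupp.supported K K A) : f z ∈ N := by
  rw [Finsupp.supported_eq_span_single] at hz
  have : Submodule.span K ((fun i => Finsupp.single i (1 : K)) '' A) ≤ N.comap f := by
    rw [Submodule.span_le]
    rintro _ ⟨T, hT, rfl⟩
    exact H T hT
  exact this hz

lemma auxL_insert (g : Fin k → (V →₀ ℕ)) (m : V →₀ ℕ) (t : Fin k) (T : Finset (Fin k)) :
    auxL g m (insert t T) = auxL g (m ⊔ g t) T := by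
  unfold auxL
  rw [Finset.sup_insert, sup_assoc]

lemma auxD_single (g : Fin k → (V →₀ ℕ)) (m : V →₀ ℕ) (T : Finset (Fin k)) [∀ s, Decidable (auxL g m (T.erase s) = auxL g m T)] :
    auxD K g m (Finsupp.single T 1) = ∑ s ∈ T, if auxL g m (T.erase s) = auxL g m T then
    auxSgn K s T • Finsupp.single (T.erase s) (1 : K) else 0 := by
  unfold auxD
  rw [Finsupp.linearCombination_single, one_smul]
  refine Finset.sum_congr rfl fun s _ => ?_
  congr

lemma auxIns_single (t : Fin k) (T : Finset (Fin k)) :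
    auxIns K t (Finsupp.single T 1) = auxSgn K t T • Finsupp.single (insert t T) (1 : K) := by
  unfold auxIns
  rw [Finsupp.linearCombination_single, one_smul]

lemma auxRem_single (t : Fin k) (T : Finset (Fin k)) :
    auxRem K t (Finsupp.single T 1) = auxSgn K t T • Finsupp.single (T.erase t) (1 : K) := by
  unfold auxRem
  rw [Finsupp.linearCombination_single, one_smul]

lemma auxPhi_single (g : Fin k → (V →₀ ℕ)) (m : V →₀ ℕ) (t : Fin k) (T : Finset (Fin k))
    [Decidable (auxL g (m ⊔ g t) T = auxL g m T)] :
    auxPhi K g m t (Finsupp.single T 1) =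
      if auxL g (m ⊔ g t) T = auxL g m T then Finsupp.single T (1 : K) else 0 := by
  unfold auxPhi
  rw [Finsupp.linearCombination_single, one_smul]
  congr

lemma auxD_ins_single (g : Fin k → (V →₀ ℕ)) (m : V →₀ ℕ) (t : Fin k) (T : Finset (Fin k))
    (ht : t ∉ T) :
    auxD K g m (auxIns K t (Finsupp.single T 1)) =
      auxPhi K g m t (Finsupp.single T 1) -
        auxIns K t (auxD K g (m ⊔ g t) (Finsupp.single T 1)) := by
  classical
  rw [auxIns_single, map_smul, auxD_single, auxD_single, auxPhi_single, Finset.sum_insert ht,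
    Finset.erase_insert ht, auxL_insert, map_sum, smul_add, sub_eq_add_neg]
  congr 1
  · by_cases h : auxL g (m ⊔ g t) T = auxL g m T
    · rw [if_pos h, if_pos h.symm, smul_smul, auxSgn_insert_self, auxSgn_sq, one_smul]
    · rw [if_neg h, if_neg (fun h' => h h'.symm), smul_zero]
  · rw [Finset.smul_sum, ← Finset.sum_neg_distrib]
    refine Finset.sum_congr rfl fun s hs => ?_
    have hst : t ≠ s := fun h => ht (h ▸ hs)
    rw [Finset.erase_insert_of_ne hst, auxL_insert]
    split_ifs with h
    · rw [map_smul, auxIns_single, smul_smul, smul_smul, auxSgn_swap t s T hs ht, neg_smul]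
    · simp

/-- sets inside `S` with `i` elements whose lcm has degree `j`. -/
def auxSet (g : Fin k → (V →₀ ℕ)) (m : V →₀ ℕ) (S : Finset (Fin k)) (i j : ℕ) :
    Set (Finset (Fin k)) :=
  { T | T ⊆ S ∧ T.card = i ∧ monomialDegree (auxL g m T) = j }

/-- vanishing of homology. -/
def auxP (K : Type*) [Field K] (g : Fin k → (V →₀ ℕ)) (m : V →₀ ℕ) (S : Finset (Fin k))
    (i j : ℕ) : Prop :=
  ∀ z ∈ Finsupp.supported K K (auxSet g m S i j), auxD K g m z = 0 →
    ∃ w ∈ Finsupp.supported K K (auxSet g m S (i + 1) j), auxD K g m w = z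

lemma auxD_ins (g : Fin k → (V →₀ ℕ)) (m : V →₀ ℕ) (t : Fin k)
    {z : Finset (Fin k) →₀ K} (hz : z ∈ Finsupp.supported K K {T | t ∉ T}) :
    auxD K g m (auxIns K t z) = auxPhi K g m t z - auxIns K t (auxD K g (m ⊔ g t) z) :=
  aux_ext (auxD K g m ∘ₗ auxIns K t)
    (auxPhi K g m t - auxIns K t ∘ₗ auxD K g (m ⊔ g t)) _
    (fun T hT => auxD_ins_single g m t T hT) hz

lemma auxD_supp (g : Fin k → (V →₀ ℕ)) (m : V →₀ ℕ) (A : Set (Finset (Fin k)))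
    (hA : ∀ T ∈ A, ∀ s, T.erase s ∈ A)
    {z : Finset (Fin k) →₀ K} (hz : z ∈ Finsupp.supported K K A) :
    auxD K g m z ∈ Finsupp.supported K K A := by
  classical
  refine aux_map _ _ A (fun T hT => ?_) hz
  rw [auxD_single]
  refine Submodule.sum_mem _ fun s _ => ?_
  split_ifs
  · exact Submodule.smul_mem _ _ (Finsupp.single_mem_supported K _ (hA T hT s))
  · exact Submodule.zero_mem _

lemma auxD_supp_not (g : Fin k → (V →₀ ℕ)) (m : V →₀ ℕ) (t : Fin k)
    {z : Finset (Fin k) →₀ K} (hz : z ∈ Finsupp.supported K K {T | t ∉ T}) :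
    auxD K g m z ∈ Finsupp.supported K K {T | t ∉ T} :=
  auxD_supp g m {T | t ∉ T} (fun _ hT _ h => hT (Finset.mem_of_mem_erase h)) hz

lemma auxPhi_auxD (g : Fin k → (V →₀ ℕ)) (m : V →₀ ℕ) (t : Fin k) (T : Finset (Fin k)) :
    auxD K g m (auxPhi K g m t (Finsupp.single T 1)) =
      auxPhi K g m t (auxD K g (m ⊔ g t) (Finsupp.single T 1)) := by
  classical
  have key : ∀ s, (auxL g (m ⊔ g t) T = auxL g m T ∧ auxL g m (T.erase s) = auxL g m T) ↔
      (auxL g (m ⊔ g t) (T.erase s) = auxL g (m ⊔ g t) T ∧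
        auxL g (m ⊔ g t) (T.erase s) = auxL g m (T.erase s)) := by
    intro s
    have h1 : ∀ U, auxL g (m ⊔ g t) U = auxL g m U ⊔ g t := by
      intro U; unfold auxL; rw [sup_right_comm]
    have h2 : auxL g m (T.erase s) ≤ auxL g m T := by
      unfold auxL; exact sup_le_sup_left (Finset.sup_mono (Finset.erase_subset _ _)) _
    rw [h1, h1]
    constructor
    · rintro ⟨a, b⟩
      rw [b]; exact ⟨rfl, a⟩
    · rintro ⟨a, b⟩
      have h3 : auxL g m T ≤ auxL g m (T.erase s) := by
        rw [← b, a]; exact le_sup_left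
      have h4 := le_antisymm h2 h3
      rw [h4] at b
      exact ⟨b, h4⟩
  rw [auxPhi_single, auxD_single, map_sum]
  by_cases h : auxL g (m ⊔ g t) T = auxL g m T
  · rw [if_pos h, auxD_single]
    refine Finset.sum_congr rfl fun s _ => ?_
    have := key s
    by_cases h' : auxL g m (T.erase s) = auxL g m T
    · obtain ⟨a, b⟩ := this.1 ⟨h, h'⟩
      rw [if_pos h', if_pos a, map_smul, auxPhi_single, if_pos b]
    · rw [if_neg h']
      split_ifs with a
      · rw [map_smul, auxPhi_single, if_neg (fun b => h' (this.2 ⟨a, b⟩).2), smul_zero]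
      · simp
  · rw [if_neg h, map_zero]
    symm
    refine Finset.sum_eq_zero fun s _ => ?_
    split_ifs with a
    · rw [map_smul, auxPhi_single, if_neg (fun b => h ((key s).2 ⟨a, b⟩).1), smul_zero]
    · simp

lemma auxD_sq_single (g : Fin k → (V →₀ ℕ)) (T : Finset (Fin k)) :
    ∀ m : V →₀ ℕ, auxD K g m (auxD K g m (Finsupp.single T 1)) = 0 := by
  classical
  induction T using Finset.induction_on with
  | empty => intro m; rw [auxD_single]; simp
  | insert t T ht ih =>
    intro m
    have h1 : Finsupp.single (insert t T) (1 : K) =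
        auxSgn K t T • auxIns K t (Finsupp.single T 1) := by
      rw [auxIns_single, smul_smul, auxSgn_sq, one_smul]
    have h2 : Finsupp.single T (1 : K) ∈ Finsupp.supported K K {T : Finset (Fin k) | t ∉ T} :=
      Finsupp.single_mem_supported K _ ht
    rw [h1, map_smul, map_smul, auxD_ins g m t h2, map_sub, auxPhi_auxD,
      auxD_ins g m t (auxD_supp_not g _ t h2), ih]
    simp

lemma auxD_sq (g : Fin k → (V →₀ ℕ)) (m : V →₀ ℕ) (z : Finset (Fin k) →₀ K) :
    auxD K g m (auxD K g m z) = 0 :=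
  aux_ext (auxD K g m ∘ₗ auxD K g m) 0 Set.univ
    (fun T _ => auxD_sq_single g T m) (by simp)

lemma auxRem_ins (t : Fin k) {z : Finset (Fin k) →₀ K}
    (hz : z ∈ Finsupp.supported K K {T | t ∉ T}) : auxRem K t (auxIns K t z) = z := by
  refine aux_ext (auxRem K t ∘ₗ auxIns K t) LinearMap.id _ (fun T hT => ?_) hz
  simp only [LinearMap.comp_apply, LinearMap.id_apply]
  rw [auxIns_single, map_smul, auxRem_single, smul_smul, auxSgn_insert_self, auxSgn_sq, one_smul,
    Finset.erase_insert hT]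

lemma auxIns_supp (t : Fin k) (z : Finset (Fin k) →₀ K) :
    auxIns K t z ∈ Finsupp.supported K K {T | t ∈ T} := by
  refine aux_map (auxIns K t) _ Set.univ (fun T _ => ?_) (by simp)
  rw [auxIns_single]
  exact Submodule.smul_mem _ _ (Finsupp.single_mem_supported K _ (by simp))

lemma auxSplit {g : Fin k → (V →₀ ℕ)} {m : V →₀ ℕ} {S : Finset (Fin k)} {i j : ℕ} (t : Fin k)
    {z : Finset (Fin k) →₀ K} (hz : z ∈ Finsupp.supported K K (auxSet g m S i j)) :
    ∃ a b, z = a + auxIns K t b ∧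
      a ∈ Finsupp.supported K K (auxSet g m (S.erase t) i j) ∧
      b ∈ Finsupp.supported K K {T | ∃ i', i = i' + 1 ∧
        T ∈ auxSet g (m ⊔ g t) (S.erase t) i' j} := by
  classical
  rw [Finsupp.supported_eq_span_single] at hz
  induction hz using Submodule.span_induction with
  | zero => exact ⟨0, 0, by simp, Submodule.zero_mem _, Submodule.zero_mem _⟩
  | add x y _ _ hx hy =>
    obtain ⟨a, b, rfl, ha, hb⟩ := hx
    obtain ⟨a', b', rfl, ha', hb'⟩ := hy
    exact ⟨a + a', b + b', by rw [map_add]; abel, Submodule.add_mem _ ha ha',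
      Submodule.add_mem _ hb hb'⟩
  | smul c x _ hx =>
    obtain ⟨a, b, rfl, ha, hb⟩ := hx
    exact ⟨c • a, c • b, by rw [map_smul, smul_add], Submodule.smul_mem _ _ ha,
      Submodule.smul_mem _ _ hb⟩
  | mem x hx =>
    obtain ⟨T, ⟨hTS, hTi, hTj⟩, rfl⟩ := hx
    by_cases ht : t ∈ T
    · refine ⟨0, auxSgn K t (T.erase t) • Finsupp.single (T.erase t) 1, ?_,
        Submodule.zero_mem _, Submodule.smul_mem _ _ (Finsupp.single_mem_supported K _ ?_)⟩
      · rw [map_smul, auxIns_single, smul_smul, auxSgn_sq, one_smul, Finset.insert_erase ht,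
          zero_add]
      · refine ⟨T.card - 1, ?_, Finset.erase_subset_erase _ hTS, Finset.card_erase_of_mem ht, ?_⟩
        · have := Finset.card_pos.2 ⟨t, ht⟩
          omega
        · rw [← auxL_insert, Finset.insert_erase ht, hTj]
    · refine ⟨Finsupp.single T 1, 0, by simp, Finsupp.single_mem_supported K _ ?_,
        Submodule.zero_mem _⟩
      exact ⟨Finset.subset_erase.2 ⟨hTS, ht⟩, hTi, hTj⟩

lemma aux_components (t : Fin k) {a b : Finset (Fin k) →₀ K}
    (ha : a ∈ Finsupp.supported K K {T | t ∉ T}) (hb : b ∈ Finsupp.supported K K {T | t ∈ T})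
    (h : a + b = 0) : a = 0 ∧ b = 0 := by
  have hd : Disjoint (Finsupp.supported K K {T : Finset (Fin k) | t ∉ T})
      (Finsupp.supported K K {T : Finset (Fin k) | t ∈ T}) := by
    apply Finsupp.disjoint_supported_supported
    rw [Set.disjoint_left]
    intro T h1 h2
    exact h1 h2
  have hab : a = -b := eq_neg_of_add_eq_zero_left h
  have ha0 : a = 0 := by
    refine Submodule.disjoint_def.1 hd a ha ?_
    rw [hab]
    exact Submodule.neg_mem _ hb
  refine ⟨ha0, ?_⟩
  rw [ha0, zero_add] at h
  exact h

lemma auxIns_mem {g : Fin k → (V →₀ ℕ)} {m : V →₀ ℕ} {S : Finset (Fin k)} {i j : ℕ} {t : Fin k}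
    (ht : t ∈ S) {w : Finset (Fin k) →₀ K}
    (hw : w ∈ Finsupp.supported K K (auxSet g (m ⊔ g t) (S.erase t) i j)) :
    auxIns K t w ∈ Finsupp.supported K K (auxSet g m S (i + 1) j) := by
  refine aux_map _ _ _ (fun T hT => ?_) hw
  obtain ⟨h1, h2, h3⟩ := hT
  rw [auxIns_single]
  refine Submodule.smul_mem _ _ (Finsupp.single_mem_supported K _ ⟨?_, ?_, ?_⟩)
  · intro s hs
    rcases Finset.mem_insert.1 hs with rfl | hs
    · exact ht
    · exact Finset.mem_of_mem_erase (h1 hs)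
  · rw [Finset.card_insert_of_notMem (fun h => Finset.notMem_erase t S (h1 h)), h2]
  · rw [auxL_insert, h3]

lemma aux_not_mem {g : Fin k → (V →₀ ℕ)} {m : V →₀ ℕ} {S : Finset (Fin k)} {i j : ℕ} {t : Fin k}
    {w : Finset (Fin k) →₀ K}
    (hw : w ∈ Finsupp.supported K K (auxSet g m (S.erase t) i j)) :
    w ∈ Finsupp.supported K K {T : Finset (Fin k) | t ∉ T} :=
  Finsupp.supported_mono (t := {T : Finset (Fin k) | t ∉ T})
    (fun _ hT h => Finset.notMem_erase t S (hT.1 h)) hw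

lemma auxSet_mono {g : Fin k → (V →₀ ℕ)} {m : V →₀ ℕ} {S : Finset (Fin k)} {i j : ℕ} {t : Fin k} :
    auxSet g m (S.erase t) i j ⊆ auxSet g m S i j :=
  fun _ hT => ⟨hT.1.trans (Finset.erase_subset _ _), hT.2⟩

/-- Removing an index. -/
lemma auxP_remove {g : Fin k → (V →₀ ℕ)} {m : V →₀ ℕ} {S : Finset (Fin k)} {i j : ℕ} {t : Fin k}
    (ht : t ∈ S) (h1 : auxP K g m (S.erase t) i j)
    (h2 : ∀ i', i = i' + 1 → auxP K g (m ⊔ g t) (S.erase t) i' j) : auxP K g m S i j := by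
  classical
  intro z hz hDz
  obtain ⟨a, b, rfl, ha, hb⟩ := auxSplit t hz
  have hb' : b ∈ Finsupp.supported K K {T : Finset (Fin k) | t ∉ T} :=
    Finsupp.supported_mono (fun _ hT h => by
      obtain ⟨i', _, h3, _⟩ := hT
      exact Finset.notMem_erase t S (h3 h)) hb
  have haN := aux_not_mem ha
  have hphi : ∀ c ∈ Finsupp.supported K K {T : Finset (Fin k) | t ∉ T},
      auxPhi K g m t c ∈ Finsupp.supported K K {T : Finset (Fin k) | t ∉ T} := by
    intro c hc
    refine aux_map _ _ _ (fun T hT => ?_) hc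
    rw [auxPhi_single]
    split_ifs
    · exact Finsupp.single_mem_supported K _ hT
    · exact Submodule.zero_mem _
  have hDb : auxD K g (m ⊔ g t) b = 0 := by
    rw [map_add, auxD_ins g m t hb'] at hDz
    have := (aux_components t (a := auxD K g m a + auxPhi K g m t b)
      (b := - auxIns K t (auxD K g (m ⊔ g t) b))
      (Submodule.add_mem _ (auxD_supp_not g m t haN) (hphi b hb'))
      (Submodule.neg_mem _ (auxIns_supp t _)) (by rw [← hDz]; abel)).2
    have h4 := auxRem_ins t (auxD_supp_not g (m ⊔ g t) t hb')
    rw [neg_eq_zero] at this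
    rw [← h4, this, map_zero]
  obtain ⟨w, hw, hDw⟩ : ∃ w ∈ Finsupp.supported K K (auxSet g (m ⊔ g t) (S.erase t) i j),
      auxD K g (m ⊔ g t) w = b := by
    rcases i with _ | i'
    · refine ⟨0, Submodule.zero_mem _, ?_⟩
      have : b ∈ Finsupp.supported K K (∅ : Set (Finset (Fin k))) :=
        Finsupp.supported_mono (fun _ hT => by
          obtain ⟨i', h, _⟩ := hT
          omega) hb
      rw [Finsupp.supported_empty, Submodule.mem_bot] at this
      rw [this, map_zero]
    · refine h2 i' rfl b ?_ hDb
      refine Finsupp.supported_mono (fun _ hT => ?_) hb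
      obtain ⟨i'', h, h5⟩ := hT
      obtain rfl : i' = i'' := by omega
      exact h5
  have hwN := aux_not_mem hw
  have hDiw := auxD_ins g m t hwN
  rw [hDw] at hDiw
  have hphiw : auxPhi K g m t w ∈ Finsupp.supported K K (auxSet g m (S.erase t) i j) := by
    refine aux_map _ _ _ (fun T hT => ?_) hw
    rw [auxPhi_single]
    split_ifs with h
    · refine Finsupp.single_mem_supported K _ ⟨hT.1, hT.2.1, ?_⟩
      rw [← h]
      exact hT.2.2
    · exact Submodule.zero_mem _
  obtain ⟨w', hw', hDw'⟩ := h1 (a + auxPhi K g m t w) (Submodule.add_mem _ ha hphiw) (by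
    have h5 : a + auxPhi K g m t w = (a + auxIns K t b) + auxD K g m (auxIns K t w) := by
      rw [hDiw]; abel
    rw [h5, map_add, hDz, auxD_sq, add_zero])
  refine ⟨w' - auxIns K t w, Submodule.sub_mem _ (Finsupp.supported_mono auxSet_mono hw')
    (auxIns_mem ht hw), ?_⟩
  rw [map_sub, hDw', hDiw]
  abel

/-- Exactness in the presence of a unit. -/
lemma auxP_unit {g : Fin k → (V →₀ ℕ)} {m : V →₀ ℕ} {S : Finset (Fin k)} {i j : ℕ} {t : Fin k}
    (ht : t ∈ S) (htm : g t ≤ m) : auxP K g m S i j := by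
  classical
  have hm : m ⊔ g t = m := sup_eq_left.2 htm
  intro z hz hDz
  obtain ⟨a, b, rfl, ha, hb⟩ := auxSplit t hz
  have hb' : b ∈ Finsupp.supported K K {T : Finset (Fin k) | t ∉ T} :=
    Finsupp.supported_mono (fun _ hT h => by
      obtain ⟨i', _, h3, _⟩ := hT
      exact Finset.notMem_erase t S (h3 h)) hb
  have haN := aux_not_mem ha
  have hphi : ∀ c : Finset (Fin k) →₀ K, auxPhi K g m t c = c := by
    intro c
    refine aux_ext (auxPhi K g m t) LinearMap.id Set.univ (fun T _ => ?_) (by simp)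
    rw [auxPhi_single, if_pos (by rw [hm])]
    rfl
  have hab : auxD K g m a + b = 0 := by
    rw [map_add, auxD_ins g m t hb', hphi] at hDz
    exact (aux_components t (a := auxD K g m a + b)
      (b := - auxIns K t (auxD K g (m ⊔ g t) b))
      (Submodule.add_mem _ (auxD_supp_not g m t haN) hb')
      (Submodule.neg_mem _ (auxIns_supp t _)) (by rw [← hDz]; abel)).1
  refine ⟨auxIns K t a, auxIns_mem ht (by rw [hm]; exact ha), ?_⟩
  rw [auxD_ins g m t haN, hphi, hm, eq_neg_of_add_eq_zero_left hab, map_neg]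
  abel

lemma auxP_of_zero {g : Fin k → (V →₀ ℕ)} {m : V →₀ ℕ} {S : Finset (Fin k)} {j : ℕ}
    (h : monomialDegree m ≠ j) : auxP K g m S 0 j := by
  intro z hz _
  refine ⟨0, Submodule.zero_mem _, ?_⟩
  have : z ∈ Finsupp.supported K K (∅ : Set (Finset (Fin k))) :=
    Finsupp.supported_mono (fun T hT => by
      obtain ⟨_, h1, h2⟩ := hT
      rw [Finset.card_eq_zero] at h1
      subst h1
      apply h
      rw [← h2]
      unfold auxL
      simp) hz
  rw [Finsupp.supported_empty, Submodule.mem_bot] at this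
  rw [this, map_zero]

lemma monomialDegree_add (a b : V →₀ ℕ) :
    monomialDegree (a + b) = monomialDegree a + monomialDegree b := by
  classical
  unfold monomialDegree
  exact Finsupp.sum_add_index' (fun _ => rfl) (fun _ _ _ => rfl)

lemma monomialDegree_single (v : V) (n : ℕ) : monomialDegree (Finsupp.single v n) = n := by
  unfold monomialDegree
  simp

/-- variable-generated colon ideals. -/
lemma auxP_koszul (g : Fin k → (V →₀ ℕ)) (n : ℕ) : ∀ (m : V →₀ ℕ) (S : Finset (Fin k)),
    S.card = n →
    (∀ s ∈ S, ∃ s' ∈ S, ∃ v, g s' - m = Finsupp.single v 1 ∧ 1 ≤ (g s - m) v) →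
    ∀ i j, i + monomialDegree m < j → auxP K g m S i j := by
  classical
  induction n with
  | zero =>
    intro m S hS _ i j hij
    rw [Finset.card_eq_zero] at hS
    subst hS
    rcases i with _ | i
    · exact auxP_of_zero (by omega)
    · intro z hz _
      refine ⟨0, Submodule.zero_mem _, ?_⟩
      have : z ∈ Finsupp.supported K K (∅ : Set (Finset (Fin k))) :=
        Finsupp.supported_mono (fun T hT => by
          obtain ⟨h0, h1, h2⟩ := hT
          rw [Finset.subset_empty] at h0
          subst h0
          simp at h1) hz
      rw [Finsupp.supported_empty, Submodule.mem_bot] at this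
      rw [this, map_zero]
  | succ n ih =>
    intro m S hS hc i j hij
    have hadd : ∀ t v, g t - m = Finsupp.single v 1 → m ⊔ g t = m + Finsupp.single v 1 := by
      intro t v h
      rw [← h]
      ext u
      simp only [Finsupp.sup_apply, Finsupp.add_apply, Finsupp.tsub_apply]
      omega
    by_cases hred : ∃ t ∈ S, ∃ s ∈ S, s ≠ t ∧ ∃ v, g s - m = Finsupp.single v 1 ∧ 1 ≤ (g t - m) v
    · obtain ⟨t, ht, s, hs, hst, v, hsv, htv⟩ := hred
      refine auxP_remove ht ?_ ?_
      · refine ih m (S.erase t) (by rw [Finset.card_erase_of_mem ht]; omega) ?_ i j hij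
        intro r hr
        obtain ⟨s', hs', u, hu, hru⟩ := hc r (Finset.mem_of_mem_erase hr)
        by_cases h : s' = t
        · subst h
          rw [hu] at htv
          have huv : u = v := by
            by_contra hne
            rw [Finsupp.single_apply, if_neg hne] at htv
            omega
          subst huv
          exact ⟨s, Finset.mem_erase.2 ⟨hst, hs⟩, u, hsv, hru⟩
        · exact ⟨s', Finset.mem_erase.2 ⟨h, hs'⟩, u, hu, hru⟩
      · intro i' _
        refine auxP_unit (t := s) (Finset.mem_erase.2 ⟨hst, hs⟩) ?_
        intro u
        have h1 := DFunLike.congr_fun hsv u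
        simp only [Finsupp.tsub_apply, Finsupp.sup_apply] at h1 htv ⊢
        rw [Finsupp.single_apply] at h1
        split_ifs at h1 with h
        · subst h; omega
        · omega
    · push Not at hred
      have hvar : ∀ s ∈ S, ∃ v, g s - m = Finsupp.single v 1 := by
        intro s hs
        obtain ⟨s', hs', v, h1, h2⟩ := hc s hs
        by_cases h : s' = s
        · subst h; exact ⟨v, h1⟩
        · have := hred s hs s' hs' h v h1
          omega
      obtain ⟨t, ht⟩ : S.Nonempty := by rw [← Finset.card_pos]; omega
      obtain ⟨v, hv⟩ := hvar t ht
      have hcard : (S.erase t).card = n := by rw [Finset.card_erase_of_mem ht]; omega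
      refine auxP_remove ht ?_ ?_
      · refine ih m _ hcard ?_ i j hij
        intro r hr
        obtain ⟨u, hu⟩ := hvar r (Finset.mem_of_mem_erase hr)
        exact ⟨r, hr, u, hu, by rw [hu]; simp⟩
      · rintro i' rfl
        rw [hadd t v hv]
        refine ih _ _ hcard ?_ i' j ?_
        · intro r hr
          obtain ⟨u, hu⟩ := hvar r (Finset.mem_of_mem_erase hr)
          have huv : u ≠ v := by
            rintro rfl
            have := hred t ht r (Finset.mem_of_mem_erase hr) (Finset.ne_of_mem_erase hr) u hu
            rw [hv] at this
            simp at this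
          have h1 : g r - (m + Finsupp.single v 1) = Finsupp.single u 1 := by
            rw [← tsub_tsub, hu]
            ext q
            simp only [Finsupp.tsub_apply, Finsupp.single_apply]
            split_ifs with h2 h3
            · exact absurd (h2.trans h3.symm) huv
            · rfl
            · rfl
            · rfl
          exact ⟨r, hr, u, h1, by rw [h1]; simp⟩
        · rw [monomialDegree_add, monomialDegree_single]
          omega

/-- A family which can be built up with linear quotients. -/
inductive AuxGood (g : Fin k → (V →₀ ℕ)) : Finset (Fin k) → Prop
  | empty : AuxGood g ∅
  | redundant (S : Finset (Fin k)) (t s : Fin k) (ht : t ∈ S) (hs : s ∈ S.erase t)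
      (hst : g s ≤ g t) (h : AuxGood g (S.erase t)) : AuxGood g S
  | linear (S : Finset (Fin k)) (t : Fin k) (ht : t ∈ S) (hd : monomialDegree (g t) = 2)
      (hc : ∀ s ∈ S.erase t, ∃ s' ∈ S.erase t, ∃ v, g s' - g t = Finsupp.single v 1 ∧
        1 ≤ (g s - g t) v) (h : AuxGood g (S.erase t)) : AuxGood g S

lemma auxP_of_good (g : Fin k → (V →₀ ℕ)) (S : Finset (Fin k)) (h : AuxGood g S) :
    ∀ i j, i + 1 < j → auxP K g 0 S i j := by
  have hz : monomialDegree (0 : V →₀ ℕ) = 0 := by simp [monomialDegree]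
  induction h with
  | empty =>
    intro i j hij
    refine auxP_koszul g 0 0 ∅ rfl (by simp) i j (by rw [hz]; omega)
  | redundant S t s ht hs hst _ ih =>
    intro i j hij
    exact auxP_remove ht (ih i j hij) fun i' _ => auxP_unit hs (hst.trans le_sup_right)
  | linear S t ht hd hc _ ih =>
    intro i j hij
    refine auxP_remove ht (ih i j hij) ?_
    rintro i' rfl
    have h0 : (0 : V →₀ ℕ) ⊔ g t = g t := sup_eq_right.2 zero_le
    rw [h0]
    exact auxP_koszul g _ (g t) _ rfl hc i' j (by rw [hd]; omega)

lemma taylor_vanish (g : Fin k → (V →₀ ℕ)) (i j : ℕ) (h : auxP K g 0 Finset.univ i j) :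
    ¬ taylorHomologyNonzero (K := K) g i j := by
  classical
  have hL : ∀ T, auxL g 0 T = taylorLcm g T := by
    intro T
    unfold auxL taylorLcm
    exact sup_eq_right.2 zero_le
  have hD : taylorDiff (K := K) g = auxD K g 0 := by
    refine Finsupp.lhom_ext' fun T => LinearMap.ext_ring ?_
    simp only [LinearMap.comp_apply, Finsupp.lsingle_apply]
    rw [auxD_single]
    unfold taylorDiff taylorBoundary
    simp only [hL, auxSgn, Finsupp.lsum_single, LinearMap.toSpanSingleton_apply, one_smul]
  have hP : ∀ i, taylorPiece (K := K) g i j =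
      Finsupp.supported K K (auxSet g 0 Finset.univ i j) := by
    intro i
    rw [Finsupp.supported_eq_span_single]
    unfold taylorPiece
    congr 1
    ext f
    simp only [Set.mem_ofPred_eq, Set.mem_image, auxSet, hL]
    constructor
    · rintro ⟨T, h1, h2, rfl⟩
      exact ⟨T, ⟨Finset.subset_univ _, h1, h2⟩, rfl⟩
    · rintro ⟨T, ⟨_, h1, h2⟩, rfl⟩
      exact ⟨T, h1, h2, rfl⟩
  unfold taylorHomologyNonzero
  rw [not_not, hD, hP, hP]
  rintro z ⟨h1, h2⟩
  obtain ⟨w, hw, hDw⟩ := h z h2 h1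
  exact ⟨w, hw, hDw⟩

end TaylorAux


/-! ### Combinatorics of edge ideals with an elimination ordering -/

section EdgeAux

variable {V K : Type*}

/-- exponent vector of an edge -/
noncomputable def auxE (u v : V) : V →₀ ℕ := Finsupp.single u 1 + Finsupp.single v 1

lemma auxE_comm (u v : V) : auxE u v = auxE v u := add_comm _ _

lemma auxE_degree (u v : V) : monomialDegree (auxE u v) = 2 := by
  unfold auxE
  rw [monomialDegree_add, monomialDegree_single, monomialDegree_single]

lemma aux_eq_of_le {a b : V →₀ ℕ} (h : a ≤ b) (hd : monomialDegree a = monomialDegree b) :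
    a = b := by
  obtain ⟨c, rfl⟩ := exists_add_of_le h
  rw [monomialDegree_add] at hd
  have hc : monomialDegree c = 0 := by omega
  have : c = 0 := by
    unfold monomialDegree at hc
    ext u
    by_contra hu
    have h1 : u ∈ c.support := Finsupp.mem_support_iff.2 hu
    have := Finset.sum_eq_zero_iff.1 hc u h1
    exact hu this
  rw [this, add_zero]

lemma auxE_inj {a b u v : V} (h : auxE a b = auxE u v) : (a = u ∧ b = v) ∨ (a = v ∧ b = u) := by
  classical
  unfold auxE at h
  have h1 := DFunLike.congr_fun h a
  have h2 := DFunLike.congr_fun h b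
  have h3 := DFunLike.congr_fun h u
  have h4 := DFunLike.congr_fun h v
  simp only [Finsupp.add_apply, Finsupp.single_apply] at h1 h2 h3 h4
  grind

lemma auxE_sub {a b d : V} (hd : d ≠ b) : auxE a d - auxE a b = Finsupp.single d 1 := by
  classical
  unfold auxE
  ext q
  simp only [Finsupp.tsub_apply, Finsupp.add_apply, Finsupp.single_apply]
  grind

lemma auxE_sub_apply {a b c d : V} (h1 : c ≠ a) (h2 : c ≠ b) : 1 ≤ (auxE c d - auxE a b) c := by
  classical
  unfold auxE
  simp only [Finsupp.tsub_apply, Finsupp.add_apply, Finsupp.single_apply]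
  grind

lemma aux_good_edges {k : ℕ} (H : SimpleGraph V) (pos : V → ℕ) (hinj : Function.Injective pos)
    (helim : ∀ c a b, pos c < pos a → pos c < pos b → H.Adj a b → H.Adj c a ∨ H.Adj c b)
    (g : Fin k → (V →₀ ℕ)) (a b : Fin k → V) (n : ℕ) : ∀ U : Finset (Fin k), U.card = n →
    (∀ t ∈ U, H.Adj (a t) (b t) ∧ pos (a t) < pos (b t) ∧ g t = auxE (a t) (b t)) →
    (∀ t ∈ U, ∀ u v, H.Adj u v → pos u < pos v → pos u < pos (a t) →
      ∃ t' ∈ U, a t' = u ∧ b t' = v) →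
    AuxGood g U := by
  classical
  induction n with
  | zero =>
    intro U hU _ _
    rw [Finset.card_eq_zero] at hU
    subst hU
    exact AuxGood.empty
  | succ n ih =>
    intro U hU hE hdown
    have hne : U.Nonempty := by rw [← Finset.card_pos]; omega
    obtain ⟨t, ht, hmax⟩ := Finset.exists_max_image U (fun t => pos (a t)) hne
    have hrec : AuxGood g (U.erase t) := by
      refine ih _ (by rw [Finset.card_erase_of_mem ht]; omega)
        (fun s hs => hE s (Finset.mem_of_mem_erase hs)) ?_
      intro s hs u v huv hp hlt
      have hs' := Finset.mem_of_mem_erase hs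
      obtain ⟨t', ht', h1, h2⟩ := hdown s hs' u v huv hp hlt
      refine ⟨t', Finset.mem_erase.2 ⟨?_, ht'⟩, h1, h2⟩
      rintro rfl
      have := hmax s hs'
      rw [h1] at this
      omega
    by_cases hdup : ∃ s ∈ U.erase t, g s ≤ g t
    · obtain ⟨s, hs, hst⟩ := hdup
      exact AuxGood.redundant U t s ht hs hst hrec
    · push Not at hdup
      obtain ⟨hadj, hpos, hg⟩ := hE t ht
      refine AuxGood.linear U t ht (by rw [hg, auxE_degree]) ?_ hrec
      intro s hs
      obtain ⟨hsU, hst⟩ := (Finset.mem_erase.1 hs).symm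
      obtain ⟨sadj, spos, sg⟩ := hE s hsU
      have hle := hmax s hsU
      have hnd := hdup s hs
      by_cases hac : a s = a t
      · have hbd : b s ≠ b t := by
          intro h
          apply hnd
          rw [sg, hg, hac, h]
        have h1 : g s - g t = Finsupp.single (b s) 1 := by
          rw [sg, hg, hac]
          exact auxE_sub hbd
        exact ⟨s, hs, b s, h1, by rw [h1]; simp⟩
      · have hlt : pos (a s) < pos (a t) :=
          lt_of_le_of_ne hle (fun h => hac (hinj h))
        have hcb : a s ≠ b t := by
          intro h
          rw [h] at hlt
          omega
        have hfin : 1 ≤ (g s - g t) (a s) := by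
          rw [sg, hg]
          exact auxE_sub_apply hac hcb
        rcases helim (a s) (a t) (b t) hlt (hlt.trans hpos) hadj with h | h
        · obtain ⟨t', ht', h1, h2⟩ := hdown t ht (a s) (a t) h hlt hlt
          refine ⟨t', Finset.mem_erase.2 ⟨?_, ht'⟩, a s, ?_, hfin⟩
          · rintro rfl
            exact hac h1.symm
          · rw [(hE t' ht').2.2, h1, h2, hg, auxE_comm (a s) (a t)]
            exact auxE_sub hcb
        · obtain ⟨t', ht', h1, h2⟩ := hdown t ht (a s) (b t) h (hlt.trans hpos) hlt
          refine ⟨t', Finset.mem_erase.2 ⟨?_, ht'⟩, a s, ?_, hfin⟩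
          · rintro rfl
            exact hac h1.symm
          · rw [(hE t' ht').2.2, h1, h2, hg, auxE_comm (a s) (b t), auxE_comm (a t) (b t)]
            exact auxE_sub hac

lemma aux_good_univ {k : ℕ} (H : SimpleGraph V) (pos : V → ℕ) (hinj : Function.Injective pos)
    (helim : ∀ c a b, pos c < pos a → pos c < pos b → H.Adj a b → H.Adj c a ∨ H.Adj c b)
    (g : Fin k → (V →₀ ℕ)) (h1 : ∀ t, ∃ u v, H.Adj u v ∧ auxE u v ≤ g t)
    (h2 : ∀ u v, H.Adj u v → ∃ t, g t = auxE u v) : AuxGood g Finset.univ := by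
  classical
  choose a₀ b₀ hadj₀ hle₀ using h1
  have hord : ∀ t, ∃ u v, H.Adj u v ∧ pos u < pos v ∧ auxE u v ≤ g t := by
    intro t
    rcases lt_or_gt_of_ne (fun h => (hadj₀ t).ne (hinj h)) with h | h
    · exact ⟨_, _, hadj₀ t, h, hle₀ t⟩
    · exact ⟨_, _, (hadj₀ t).symm, h, by rw [auxE_comm]; exact hle₀ t⟩
  choose a b hadj hpos hle using hord
  have h2' : ∀ u v, H.Adj u v → pos u < pos v →
      ∃ t, g t = auxE (a t) (b t) ∧ a t = u ∧ b t = v := by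
    intro u v huv hp
    obtain ⟨t, ht⟩ := h2 u v huv
    have h3 : auxE (a t) (b t) = auxE u v := by
      rw [← ht]
      refine aux_eq_of_le (hle t) ?_
      rw [ht, auxE_degree, auxE_degree]
    refine ⟨t, by rw [h3, ht], ?_⟩
    rcases auxE_inj h3 with h | h
    · exact h
    · have := hpos t
      rw [h.1, h.2] at this
      omega
  set U : Finset (Fin k) := Finset.univ.filter fun t => g t = auxE (a t) (b t) with hU
  have hgoodU : AuxGood g U := by
    refine aux_good_edges H pos hinj helim g a b _ U rfl ?_ ?_
    · intro t ht
      exact ⟨hadj t, hpos t, (Finset.mem_filter.1 ht).2⟩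
    · intro t _ u v huv hp _
      obtain ⟨t', h3, h4, h5⟩ := h2' u v huv hp
      exact ⟨t', Finset.mem_filter.2 ⟨Finset.mem_univ _, h3⟩, h4, h5⟩
  have hall : ∀ W : Finset (Fin k), AuxGood g (W ∪ U) := by
    intro W
    induction W using Finset.induction_on with
    | empty => simpa using hgoodU
    | insert w W hw ih =>
      by_cases h : w ∈ W ∪ U
      · rw [Finset.insert_union, Finset.insert_eq_of_mem h]
        exact ih
      · obtain ⟨t, h3, h4, h5⟩ := h2' (a w) (b w) (hadj w) (hpos w)
        have htU : t ∈ U := Finset.mem_filter.2 ⟨Finset.mem_univ _, h3⟩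
        have her : (insert w W ∪ U).erase w = W ∪ U := by
          rw [Finset.insert_union, Finset.erase_insert h]
        refine AuxGood.redundant _ w t (by simp) ?_ ?_ ?_
        · rw [her]
          exact Finset.mem_union_right _ htU
        · rw [h3, h4, h5]
          exact hle w
        · rw [her]
          exact ih
  have := hall Finset.univ
  rwa [Finset.union_eq_left.2 (Finset.subset_univ U)] at this

lemma aux_mono_mem [Field K] (A : Set (V →₀ ℕ)) (m : V →₀ ℕ) :
    monomial m (1 : K) ∈ Ideal.span ((fun s => monomial s (1 : K)) '' A) ↔ ∃ a ∈ A, a ≤ m := by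
  classical
  rw [mem_ideal_span_monomial_image]
  rw [support_monomial, if_neg one_ne_zero]
  simp

lemma aux_XX [Field K] (u v : V) :
    (X u * X v : MvPolynomial V K) = monomial (auxE u v) 1 := by
  unfold auxE
  rw [X, X, monomial_mul, one_mul]

lemma aux_edge_mem [Field K] (H : SimpleGraph V) (m : V →₀ ℕ) :
    monomial m (1 : K) ∈ edgeIdeal (K := K) H ↔ ∃ u v, H.Adj u v ∧ auxE u v ≤ m := by
  have : { p : MvPolynomial V K | ∃ u v, H.Adj u v ∧ p = X u * X v } =
      (fun s => monomial s (1 : K)) '' { s | ∃ u v, H.Adj u v ∧ s = auxE u v } := by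
    ext p
    constructor
    · rintro ⟨u, v, h, rfl⟩
      exact ⟨auxE u v, ⟨u, v, h, rfl⟩, (aux_XX u v).symm⟩
    · rintro ⟨_, ⟨u, v, h, rfl⟩, rfl⟩
      exact ⟨u, v, h, (aux_XX u v).symm⟩
  unfold edgeIdeal
  rw [this, aux_mono_mem]
  constructor
  · rintro ⟨_, ⟨u, v, h, rfl⟩, h2⟩
    exact ⟨u, v, h, h2⟩
  · rintro ⟨u, v, h, h2⟩
    exact ⟨_, ⟨u, v, h, rfl⟩, h2⟩

lemma aux_edge_mem_iff [Field K] (H : SimpleGraph V) (u v : V) :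
    X u * X v ∈ edgeIdeal (K := K) H ↔ H.Adj u v := by
  rw [aux_XX, aux_edge_mem]
  constructor
  · rintro ⟨a, b, h, hle⟩
    have := aux_eq_of_le hle (by rw [auxE_degree, auxE_degree])
    rcases auxE_inj this with ⟨rfl, rfl⟩ | ⟨rfl, rfl⟩
    · exact h
    · exact h.symm
  · intro h
    exact ⟨u, v, h, le_rfl⟩

lemma aux_reg_le [Field K] (H : SimpleGraph V) (pos : V → ℕ) (hinj : Function.Injective pos)
    (helim : ∀ c a b, pos c < pos a → pos c < pos b → H.Adj a b → H.Adj c a ∨ H.Adj c b) :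
    reg (edgeIdeal (K := K) H) ≤ 2 := by
  unfold reg
  refine csSup_le' ?_
  rintro d ⟨i, j, ⟨k, g, hg, hnz⟩, rfl⟩
  by_contra hlt
  refine taylor_vanish g (i + 1) j (auxP_of_good g _ ?_ (i + 1) j (by omega)) hnz
  have hspan : monomialSpan (K := K) g =
      Ideal.span ((fun s => monomial s (1 : K)) '' Set.range g) := by
    unfold monomialSpan
    rw [← Set.range_comp]
    rfl
  have h1 : ∀ t, ∃ u v, H.Adj u v ∧ auxE u v ≤ g t := by
    intro t
    rw [← aux_edge_mem (K := K), hg, hspan, aux_mono_mem]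
    exact ⟨g t, ⟨t, rfl⟩, le_rfl⟩
  refine aux_good_univ H pos hinj helim g h1 ?_
  intro u v huv
  have h2 := (aux_edge_mem_iff (K := K) H u v).2 huv
  rw [hg, hspan, aux_XX, aux_mono_mem] at h2
  obtain ⟨_, ⟨t, rfl⟩, ht⟩ := h2
  refine ⟨t, ?_⟩
  obtain ⟨u', v', _, h3⟩ := h1 t
  have h4 := aux_eq_of_le (h3.trans ht) (by rw [auxE_degree, auxE_degree])
  exact le_antisymm ht (h4 ▸ h3)

lemma aux_chordal (H : SimpleGraph V) (key : V → ℕ)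
    (helim : ∀ c a b, key c ≤ key a → key c ≤ key b → c ≠ a → c ≠ b → H.Adj a b →
      H.Adj c a ∨ H.Adj c b) : (Hᶜ).Chordal := by
  rintro n hn w ⟨_, hinj, hadj⟩
  have : NeZero n := ⟨by omega⟩
  obtain ⟨c, _, hc⟩ := Finset.exists_min_image (Finset.univ : Finset (Fin n))
    (fun i => key (w i)) ⟨0, Finset.mem_univ _⟩
  obtain ⟨c, hcn⟩ := c
  have hp : (c + 1) % n < n := Nat.mod_lt _ (by omega)
  have hq : (c + (n - 1)) % n < n := Nat.mod_lt _ (by omega)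
  have hp' : (c + 1) % n = if c + 1 = n then 0 else c + 1 := by
    split_ifs with h
    · rw [h, Nat.mod_self]
    · exact Nat.mod_eq_of_lt (by omega)
  have hq' : (c + (n - 1)) % n = if c = 0 then n - 1 else c - 1 := by
    split_ifs with h
    · rw [h, zero_add]; exact Nat.mod_eq_of_lt (by omega)
    · rw [show c + (n - 1) = (c - 1) + n by omega, Nat.add_mod_right]
      exact Nat.mod_eq_of_lt (by omega)
  have hmod : ∀ i, i < n → (i + 1) % n = if i + 1 = n then 0 else i + 1 := by
    intro i hi
    split_ifs with h
    · rw [h, Nat.mod_self]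
    · exact Nat.mod_eq_of_lt (by omega)
  set p := (c + 1) % n
  set q := (c + (n - 1)) % n
  have h1 : Hᶜ.Adj (w ⟨c, hcn⟩) (w ⟨p, hp⟩) := (hadj _ _).2 (Or.inl rfl)
  have h2 : Hᶜ.Adj (w ⟨c, hcn⟩) (w ⟨q, hq⟩) := by
    refine (hadj _ _).2 (Or.inr ?_)
    simp only
    rw [hmod q hq]
    split_ifs at * <;> omega
  have h3 : ¬ Hᶜ.Adj (w ⟨p, hp⟩) (w ⟨q, hq⟩) := by
    rw [hadj]
    simp only
    rw [hmod q hq, hmod p hp]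
    split_ifs at * <;> omega
  have hpq : p ≠ q := by
    split_ifs at * <;> omega
  rw [SimpleGraph.compl_adj] at h1 h2 h3
  have h4 : H.Adj (w ⟨p, hp⟩) (w ⟨q, hq⟩) := by
    by_contra h
    refine h3 ⟨fun h' => hpq ?_, h⟩
    have := hinj h'
    simpa using this
  rcases helim _ _ _ (hc ⟨p, hp⟩ (Finset.mem_univ _)) (hc ⟨q, hq⟩ (Finset.mem_univ _))
    h1.1 h2.1 h4 with h | h
  · exact h1.2 h
  · exact h2.2 h

lemma aux_refine [Fintype V] (key : V → ℕ) :
    ∃ pos : V → ℕ, Function.Injective pos ∧ ∀ a b, pos a < pos b → key a ≤ key b := by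
  classical
  let e := Fintype.equivFin V
  have hlt : ∀ v, (e v : ℕ) < Fintype.card V := fun v => (e v).2
  refine ⟨fun v => key v * Fintype.card V + e v, ?_, ?_⟩
  · intro a b h
    simp only at h
    have ha := hlt a
    have hb := hlt b
    have : (e a : ℕ) = e b := by
      have h1 := congrArg (· % Fintype.card V) h
      simpa [Nat.mul_add_mod', Nat.mod_eq_of_lt ha, Nat.mod_eq_of_lt hb] using h1
    exact e.injective (Fin.ext this)
  · intro a b h
    simp only at h
    by_contra hlt'
    push Not at hlt'
    have : (key b + 1) * Fintype.card V ≤ key a * Fintype.card V :=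
      Nat.mul_le_mul_right _ hlt'
    have hb := hlt b
    rw [add_mul, one_mul] at this
    omega

end EdgeAux


/-! ### The graph `G'` -/

section ColonAux

variable {V K : Type*}

lemma aux_path_list (G : SimpleGraph V) (a b c d : V) :
    G.IsPathList [a, b, c, d] ↔ (G.Adj a b ∧ G.Adj b c ∧ G.Adj c d) ∧ [a, b, c, d].Nodup := by
  have h : G.IsPathList [a, b, c, d] ↔ List.IsChain G.Adj [a, b, c, d] ∧ [a, b, c, d].Nodup :=
    Iff.rfl
  rw [h]
  simp

lemma aux_list_prod [DecidableEq V] [Field K] (l : List V) :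
    ((l.map X).prod : MvPolynomial V K) =
      monomial (Multiset.toFinsupp (↑l : Multiset V)) 1 := by
  induction l with
  | nil => simp
  | cons a l ih =>
    rw [List.map_cons, List.prod_cons, ih, ← Multiset.cons_coe, ← Multiset.singleton_add,
      Multiset.toFinsupp_add, Multiset.toFinsupp_singleton, X, monomial_mul, one_mul]

lemma aux_path_mem [Field K] (G : SimpleGraph V) (t : ℕ) (l₀ : List V) (hl₀ : l₀.length = t) :
    (l₀.map X).prod ∈ pathIdeal (K := K) G t ↔
      ∃ l : List V, G.IsPathList l ∧ l.Perm l₀ := by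
  classical
  have : { p : MvPolynomial V K | ∃ l : List V, G.IsPathList l ∧ l.length = t ∧
        p = (l.map X).prod } =
      (fun s => monomial s (1 : K)) '' { s | ∃ l : List V, G.IsPathList l ∧ l.length = t ∧
        s = Multiset.toFinsupp (↑l : Multiset V) } := by
    ext p
    constructor
    · rintro ⟨l, h, h', rfl⟩
      exact ⟨_, ⟨l, h, h', rfl⟩, (aux_list_prod l).symm⟩
    · rintro ⟨_, ⟨l, h, h', rfl⟩, rfl⟩
      exact ⟨l, h, h', (aux_list_prod l).symm⟩
  unfold pathIdeal
  rw [this, aux_list_prod, aux_mono_mem]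
  constructor
  · rintro ⟨_, ⟨l, h, h', rfl⟩, hle⟩
    refine ⟨l, h, ?_⟩
    rw [← Multiset.coe_eq_coe]
    refine Multiset.eq_of_le_of_card_le ?_ (by simp [hl₀, h'])
    exact Finsupp.orderIsoMultiset.symm.le_iff_le.1 hle
  · rintro ⟨l, h, hp⟩
    refine ⟨_, ⟨l, h, by rw [hp.length_eq, hl₀], rfl⟩, ?_⟩
    rw [Multiset.coe_eq_coe.2 hp]

/-- adjacency in the colon graph -/
def auxQ (G : SimpleGraph V) (x y u v : V) : Prop :=
  (G.Adj u x ∧ G.Adj v y) ∨ (G.Adj u y ∧ G.Adj v x) ∨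
    (G.Adj u v ∧ (G.Adj u x ∨ G.Adj u y ∨ G.Adj v x ∨ G.Adj v y))

lemma aux_adj_iff [Field K] (G : SimpleGraph V) (x y : V) (he : G.Adj x y) (G' : SimpleGraph V)
    (hG' : edgeIdeal (K := K) G' =
      Submodule.colon (pathIdeal (K := K) G 4)
        (Ideal.span {X x * X y} : Ideal (MvPolynomial V K))) (u v : V) :
    G'.Adj u v ↔ u ≠ v ∧ u ≠ x ∧ u ≠ y ∧ v ≠ x ∧ v ≠ y ∧ auxQ G x y u v := by
  rw [← aux_edge_mem_iff (K := K), hG', Ideal.mem_colon_span_singleton]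
  have h1 : (X u * X v * (X x * X y) : MvPolynomial V K) = ([u, v, x, y].map X).prod := by
    simp [mul_assoc]
  rw [h1, aux_path_mem G 4 _ rfl]
  have hxy := he.ne
  constructor
  · rintro ⟨l, hl, hp⟩
    have hlen := hp.length_eq
    obtain ⟨a, b, c, d, rfl⟩ : ∃ a b c d, l = [a, b, c, d] := by
      match l, hlen with
      | [a, b, c, d], _ => exact ⟨a, b, c, d, rfl⟩
    rw [aux_path_list] at hl
    obtain ⟨⟨hab, hbc, hcd⟩, hnd⟩ := hl
    have hnd' := hp.nodup_iff.1 hnd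
    have ha : a ∈ [u, v, x, y] := hp.subset (by simp)
    have hb : b ∈ [u, v, x, y] := hp.subset (by simp)
    have hc : c ∈ [u, v, x, y] := hp.subset (by simp)
    have hd : d ∈ [u, v, x, y] := hp.subset (by simp)
    simp only [List.mem_cons, List.not_mem_nil, or_false, List.nodup_cons, not_or,
      List.nodup_nil, and_true, not_false_eq_true] at ha hb hc hd hnd hnd'
    obtain ⟨⟨n1, n2, n3⟩, ⟨n4, n5⟩, n6⟩ := hnd'
    obtain ⟨⟨m1, m2, m3⟩, ⟨m4, m5⟩, m6⟩ := hnd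
    refine ⟨n1, n2, n3, n4, n5, ?_⟩
    unfold auxQ
    have hba := hab.symm
    have hcb := hbc.symm
    have hdc := hcd.symm
    rcases ha with rfl | rfl | rfl | rfl <;> rcases hb with rfl | rfl | rfl | rfl <;>
      first
      | exact absurd rfl m1
      | (rcases hc with rfl | rfl | rfl | rfl <;>
          first
          | exact absurd rfl m2
          | exact absurd rfl m4
          | (rcases hd with rfl | rfl | rfl | rfl <;>
              first
              | exact absurd rfl m3
              | exact absurd rfl m5
              | exact absurd rfl m6
              | simp [hab, hbc, hcd, hba, hcb, hdc]))
  · rintro ⟨n1, n2, n3, n4, n5, hQ⟩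
    have mk : ∀ a b c d, G.Adj a b → G.Adj b c → G.Adj c d → [a, b, c, d].Perm [u, v, x, y] →
        ∃ l : List V, G.IsPathList l ∧ l.Perm [u, v, x, y] := by
      intro a b c d h1 h2 h3 hp
      refine ⟨[a, b, c, d], (aux_path_list G a b c d).2 ⟨⟨h1, h2, h3⟩, ?_⟩, hp⟩
      rw [hp.nodup_iff]
      simp [n1, n2, n3, n4, n5, hxy]
    classical
    rcases hQ with ⟨h1, h2⟩ | ⟨h1, h2⟩ | ⟨h, h1 | h1 | h1 | h1⟩
    · exact mk u x y v h1 he h2.symm (by rw [List.perm_iff_count]; intro q; simp only [List.count_cons]; omega)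
    · exact mk u y x v h1 he.symm h2.symm (by rw [List.perm_iff_count]; intro q; simp only [List.count_cons]; omega)
    · exact mk v u x y h.symm h1 he (by rw [List.perm_iff_count]; intro q; simp only [List.count_cons]; omega)
    · exact mk v u y x h.symm h1 he.symm (by rw [List.perm_iff_count]; intro q; simp only [List.count_cons]; omega)
    · exact mk u v x y h h1 he (List.Perm.refl _)
    · exact mk u v y x h h1 he.symm (by rw [List.perm_iff_count]; intro q; simp only [List.count_cons]; omega)

open Classical in
/-- neighbours of `v` not adjacent to the edge `xy`. -/
noncomputable def auxN [Fintype V] (G : SimpleGraph V) (x y v : V) : Finset V :=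
  Finset.univ.filter fun z => z ≠ x ∧ z ≠ y ∧ ¬ G.Adj z x ∧ ¬ G.Adj z y ∧ G.Adj v z

/-- The key step for vertices adjacent to exactly one end. -/
lemma aux_typeA [Fintype V] (G : SimpleGraph V) (hgap : G.GapFree) (hcricket : G.CricketFree)
    (x y : V) (he : G.Adj x y) (c a b : V) (hca : c ≠ a) (hcb : c ≠ b)
    (cx : c ≠ x) (cy : c ≠ y) (ax : a ≠ x) (ay : a ≠ y) (bx : b ≠ x) (by' : b ≠ y)
    (hcx : G.Adj c x) (hcy : ¬ G.Adj c y) (hax : G.Adj a x) (hay : ¬ G.Adj a y)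
    (hby : ¬ G.Adj b y) (hab : G.Adj a b)
    (hN : (auxN G x y a).card ≤ (auxN G x y c).card) :
    G.Adj c a ∨ G.Adj c b := by
  classical
  by_contra hcon
  push Not at hcon
  obtain ⟨nca, ncb⟩ := hcon
  by_cases hbx : G.Adj b x
  · apply hcricket
    exact ⟨c, y, x, a, b, cy, cx, hca, hcb, he.ne.symm, ay.symm, by'.symm, ax.symm, bx.symm,
      hab.ne, hcx, he.symm, hax.symm, hbx.symm, hab, hcy, nca, ncb, fun h => hay h.symm,
      fun h => hby h.symm⟩
  · have hb : b ∈ auxN G x y a := by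
      unfold auxN
      simp [bx, by', hbx, hby, hab]
    have hb' : b ∉ auxN G x y c := by
      unfold auxN
      simp [ncb]
    obtain ⟨z, hz, hz'⟩ : ∃ z ∈ auxN G x y c, z ∉ auxN G x y a := by
      by_contra h
      push Not at h
      have hss : auxN G x y c ⊂ auxN G x y a := ⟨h, fun h' => hb' (h' hb)⟩
      have := Finset.card_lt_card hss
      omega
    unfold auxN at hz hz'
    simp only [Finset.mem_filter, Finset.mem_univ, true_and] at hz hz'
    obtain ⟨zx, zy, nzx, nzy, hcz⟩ := hz
    have naz : ¬ G.Adj a z := fun h => hz' ⟨zx, zy, nzx, nzy, h⟩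
    have hza : z ≠ a := by rintro rfl; exact nca hcz
    have hzb : z ≠ b := by rintro rfl; exact ncb hcz
    rcases hgap c z a b hcz hab hca hcb hza hzb with h | h | h | h
    · exact nca h
    · exact ncb h
    · exact naz h.symm
    · rcases hgap z b x y h he zx zy bx by' with h | h | h | h
      · exact nzx h
      · exact nzy h
      · exact hbx h
      · exact hby h

lemma auxN_comm [Fintype V] (G : SimpleGraph V) (x y v : V) : auxN G x y v = auxN G y x v := by
  unfold auxN
  ext z
  simp only [Finset.mem_filter]
  tauto

lemma aux_typeA' [Fintype V] (G : SimpleGraph V) (hgap : G.GapFree) (hcricket : G.CricketFree)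
    (x y : V) (he : G.Adj x y) (c a b : V) (hca : c ≠ a) (hcb : c ≠ b)
    (cx : c ≠ x) (cy : c ≠ y) (ax : a ≠ x) (ay : a ≠ y) (bx : b ≠ x) (by' : b ≠ y)
    (hcx : G.Adj c x) (hcy : ¬ G.Adj c y)
    (hQ : auxQ G x y a b)
    (hNa : G.Adj a x → ¬ G.Adj a y → (auxN G x y a).card ≤ (auxN G x y c).card)
    (hNb : G.Adj b x → ¬ G.Adj b y → (auxN G x y b).card ≤ (auxN G x y c).card) :
    auxQ G x y c a ∨ auxQ G x y c b := by
  by_cases hay : G.Adj a y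
  · exact Or.inl (Or.inl ⟨hcx, hay⟩)
  by_cases hby : G.Adj b y
  · exact Or.inr (Or.inl ⟨hcx, hby⟩)
  have hab : G.Adj a b ∧ (G.Adj a x ∨ G.Adj b x) := by
    unfold auxQ at hQ
    tauto
  have : G.Adj c a ∨ G.Adj c b := by
    rcases hab with ⟨hab, hax | hbx⟩
    · exact aux_typeA G hgap hcricket x y he c a b hca hcb cx cy ax ay bx by' hcx hcy hax hay
        hby hab (hNa hax hay)
    · exact (aux_typeA G hgap hcricket x y he c b a hcb hca cx cy bx by' ax ay hcx hcy hbx hby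
        hay hab.symm (hNb hbx hby)).symm
  unfold auxQ
  tauto

lemma auxQ_comm (G : SimpleGraph V) (x y u v : V) : auxQ G x y u v ↔ auxQ G y x u v := by
  unfold auxQ
  tauto

open Classical in
/-- The elimination key. -/
noncomputable def auxKey [Fintype V] (G : SimpleGraph V) (x y v : V) : ℕ :=
  if G.Adj v x ∧ G.Adj v y then 0
  else if v ≠ x ∧ v ≠ y ∧ (G.Adj v x ∨ G.Adj v y) then
    1 + (Fintype.card V - (auxN G x y v).card)
  else Fintype.card V + 2

lemma aux_elim [Fintype V] (G : SimpleGraph V) (hgap : G.GapFree) (hcricket : G.CricketFree)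
    (x y : V) (he : G.Adj x y) (G' : SimpleGraph V)
    (hadj : ∀ u v, G'.Adj u v ↔
      u ≠ v ∧ u ≠ x ∧ u ≠ y ∧ v ≠ x ∧ v ≠ y ∧ auxQ G x y u v) (c a b : V)
    (h1 : auxKey G x y c ≤ auxKey G x y a) (h2 : auxKey G x y c ≤ auxKey G x y b)
    (hca : c ≠ a) (hcb : c ≠ b) (hab : G'.Adj a b) : G'.Adj c a ∨ G'.Adj c b := by
  classical
  rw [hadj] at hab
  obtain ⟨nab, ax, ay, bx, by', hQ⟩ := hab
  have hcard : ∀ v, (auxN G x y v).card ≤ Fintype.card V := fun v => Finset.card_le_univ _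
  suffices h : c ≠ x ∧ c ≠ y ∧ (auxQ G x y c a ∨ auxQ G x y c b) by
    obtain ⟨cx, cy, h | h⟩ := h
    · exact Or.inl ((hadj _ _).2 ⟨hca, cx, cy, ax, ay, h⟩)
    · exact Or.inr ((hadj _ _).2 ⟨hcb, cx, cy, bx, by', h⟩)
  by_cases hC : G.Adj c x ∧ G.Adj c y
  · refine ⟨hC.1.ne, hC.2.ne, ?_⟩
    unfold auxQ at hQ ⊢
    tauto
  by_cases hA : c ≠ x ∧ c ≠ y ∧ (G.Adj c x ∨ G.Adj c y)
  · obtain ⟨cx, cy, hA⟩ := hA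
    refine ⟨cx, cy, ?_⟩
    have hkc : auxKey G x y c = 1 + (Fintype.card V - (auxN G x y c).card) := by
      unfold auxKey
      rw [if_neg hC, if_pos ⟨cx, cy, hA⟩]
    have hk : ∀ v, auxKey G x y c ≤ auxKey G x y v → v ≠ x → v ≠ y →
        (G.Adj v x ∨ G.Adj v y) → ¬ (G.Adj v x ∧ G.Adj v y) →
        (auxN G x y v).card ≤ (auxN G x y c).card := by
      intro v hv vx vy hv1 hv2
      rw [hkc] at hv
      unfold auxKey at hv
      rw [if_neg hv2, if_pos ⟨vx, vy, hv1⟩] at hv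
      have := hcard v
      have := hcard c
      omega
    by_cases hcx : G.Adj c x
    · have hcy : ¬ G.Adj c y := fun h => hC ⟨hcx, h⟩
      exact aux_typeA' G hgap hcricket x y he c a b hca hcb cx cy ax ay bx by' hcx hcy hQ
        (fun h h' => hk a h1 ax ay (Or.inl h) (fun h'' => h' h''.2))
        (fun h h' => hk b h2 bx by' (Or.inl h) (fun h'' => h' h''.2))
    · have hcy : G.Adj c y := hA.resolve_left hcx
      rw [auxQ_comm G x y c a, auxQ_comm G x y c b]
      refine aux_typeA' G hgap hcricket y x he.symm c a b hca hcb cy cx ay ax by' bx hcy hcx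
        ((auxQ_comm G x y a b).1 hQ) ?_ ?_
      · intro h h'
        rw [auxN_comm G y x, auxN_comm G y x]
        exact hk a h1 ax ay (Or.inr h) (fun h'' => h' h''.1)
      · intro h h'
        rw [auxN_comm G y x, auxN_comm G y x]
        exact hk b h2 bx by' (Or.inr h) (fun h'' => h' h''.1)
  · exfalso
    have hkc : auxKey G x y c = Fintype.card V + 2 := by
      unfold auxKey
      rw [if_neg hC, if_neg hA]
    have hk : ∀ v, auxKey G x y c ≤ auxKey G x y v → v ≠ x → v ≠ y →
        ¬ (G.Adj v x ∨ G.Adj v y) := by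
      intro v hv vx vy hv1
      rw [hkc] at hv
      unfold auxKey at hv
      split_ifs at hv with h3 h4
      · omega
      · omega
      · exact h4 ⟨vx, vy, hv1⟩
    have ha := hk a h1 ax ay
    have hb := hk b h2 bx by'
    unfold auxQ at hQ
    tauto

end ColonAux

/-- If `G` is gap-free and cricket-free with `I_4(G) ≠ 0`, `e = xy` is an
edge of `G`, and `G'` is the simple graph whose edge ideal is `(I_4(G) : x_x x_y)`,
then `(G')ᶜ` is chordal; equivalently, `reg (I_4(G) : x_x x_y) ≤ 2`. -/
theorem stmt10 {V K : Type*} [Fintype V] [Field K] (G : SimpleGraph V)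
    (hgap : G.GapFree) (hcricket : G.CricketFree)
    (h4 : pathIdeal (K := K) G 4 ≠ ⊥)
    (x y : V) (he : G.Adj x y) (G' : SimpleGraph V)
    (hG' : edgeIdeal (K := K) G' =
      Submodule.colon (pathIdeal (K := K) G 4) (Ideal.span {X x * X y} : Ideal (MvPolynomial V K))) :
    (G'ᶜ).Chordal ∧
      reg (Submodule.colon (pathIdeal (K := K) G 4) (Ideal.span {X x * X y} : Ideal (MvPolynomial V K))) ≤ 2 := by

  have hadj := aux_adj_iff G x y he G' hG'
  have helim := aux_elim G hgap hcricket x y he G' hadj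
  refine ⟨aux_chordal G' (auxKey G x y) helim, ?_⟩
  rw [← hG']
  obtain ⟨pos, hinj, hpos⟩ := aux_refine (auxKey G x y)
  refine aux_reg_le G' pos hinj ?_
  intro c a b h1 h2 hab
  exact helim c a b (hpos _ _ h1) (hpos _ _ h2) (fun h => by subst h; omega)
    (fun h => by subst h; omega) hab
end
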